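/- arXiv:2406.13447 — 3 statements merged into one kernel-verified Lean document; each statement's English description precedes it below -/
import Mathlib

section
/- Isotonic regression: there exist universal constants c, C > 0 such that for all integers n ≥ 2 and all δ ∈ (0,1/4], taking Θ := {θ = (θ₁,…,θ_n) ∈ [0,1]^n : θ₁ ≤ θ₂ ≤ … ≤ θ_n} and 𝒫_θ := {N_n(θ, I_n)}, one has c·min(n^{−2/3} + log(1/δ)/n, 1) ≤ M(δ, 𝒫_Θ, n^{−1}‖·‖₂²) ≤ C·min(n^{−2/3} + log(1/δ)/n, 1). -/
/-!
The minimax quantile is of order `n ^ (-2/3) + log (1/δ) / n`, truncated at `1`. Throughout, `k` is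
an integer of order `n ^ (1/3)` with `n ≤ k ^ 3`, and the indices are grouped into `k` blocks of
length `k ^ 2`.

*Upper bound.* The estimator is least squares over a finite net of monotone vectors. The net has
squared radius `O(k)` and log-cardinality `O(k)`, without a logarithmic factor (`exists_net`). To see
this, round `θ` down to multiples of `1 / k`. A block along which the rounded vector increases by
`d / k` is cut into at most `d + 1` pieces of equal length, and `θ` is replaced on each piece by the
largest rounded value there. The increments `d` add up to at most `k`, so there are `O(k)` pieces,
and a telescoping sum bounds the squared error by `O(k)` (`sum_stepVal_sq`). The step function is
determined by two monotone sequences of length `O(k)` with values in `{0, …, k}` (the values at the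
block boundaries, which determine the partition, and the values on the pieces), and such a sequence
is determined by a subset of a set of `O(k)` elements (`code_inj`). Least squares over the net is
controlled by a union bound over exponential moments (`lse_prob`). The truncation at `1` holds
because the loss is at most `1` on `[0, 1] ^ n`.

*Lower bound.* Both parts use `integral_gauss_le`, a change of measure through the second moment
`exp ‖θ - η‖²` of the likelihood ratio. The term `log (1/δ) / n` comes from two constant vectors
(`lower_bound_two_point`). The term `n ^ (-2/3)` comes from Assouad's argument for staircases whose
`k` steps are raised by `0` or `1 / (2 * k)` (`lower_bound_stairs`). Truncation of the error in each
coordinate turns the bound in expectation into a bound for the quantile: the average truncated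
error is at least `5 / 16` of its maximum, whereas an estimator that is accurate with probability
`3 / 4` would have an average only slightly above `1 / 4` of it.
-/

open MeasureTheory ENNReal ProbabilityTheory

/-- The minimax `(1-δ)`th quantile. -/
noncomputable def minimaxQuantile {Θ 𝒳 : Type*} [MeasurableSpace Θ] [MeasurableSpace 𝒳]
    (Pfam : Θ → Set (Measure 𝒳)) (L : Θ → Θ → ℝ) (δ : ℝ) : ℝ≥0∞ :=
  ⨅ T : {f : 𝒳 → Θ // Measurable f}, ⨆ θ : Θ, ⨆ P ∈ Pfam θ,
    sInf {r : ℝ≥0∞ | ENNReal.ofReal (1 - δ) ≤ P {x | ENNReal.ofReal (L (T.1 x) θ) ≤ r}}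

namespace Isotonic

/-! ### Exponential moments and likelihood ratios of Gaussian vectors -/

/-- The law `N(θ, I)` of the Gaussian sequence model with mean vector `θ`. -/
noncomputable abbrev gauss {ι : Type*} [Fintype ι] (θ : ι → ℝ) : Measure (ι → ℝ) :=
  Measure.pi fun i => gaussianReal (θ i) 1

lemma integral_exp_gauss_one (m a : ℝ) :
    ∫ x, Real.exp (a * (x - m)) ∂gaussianReal m 1 = Real.exp (a ^ 2 / 2) := by
  have h := congrFun (mgf_id_gaussianReal (μ := m) (v := 1)) a
  simp only [mgf, id, NNReal.coe_one, one_mul] at h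
  have : ∀ x : ℝ, Real.exp (a * (x - m)) = Real.exp (a * x) * Real.exp (-(a * m)) := by
    intro x; rw [← Real.exp_add]; ring_nf
  simp_rw [this]
  rw [integral_mul_const, h, ← Real.exp_add]
  ring_nf

lemma integrable_exp_gauss_one (m a : ℝ) :
    Integrable (fun x => Real.exp (a * (x - m))) (gaussianReal m 1) := by
  have : ∀ x : ℝ, Real.exp (a * (x - m)) = Real.exp (a * x) * Real.exp (-(a * m)) := by
    intro x; rw [← Real.exp_add]; ring_nf
  simp_rw [this]
  exact (integrable_exp_mul_gaussianReal a).mul_const _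

variable {ι : Type*} [Fintype ι]

lemma integral_exp_gauss (θ a : ι → ℝ) :
    ∫ x, Real.exp (∑ i, a i * (x i - θ i)) ∂gauss θ = Real.exp ((∑ i, a i ^ 2) / 2) := by
  simp_rw [Real.exp_sum]
  rw [integral_fintype_prod_eq_prod (fun i y => Real.exp (a i * (y - θ i)))]
  simp_rw [integral_exp_gauss_one]
  rw [← Real.exp_sum, Finset.sum_div]

lemma integrable_exp_gauss (θ a : ι → ℝ) :
    Integrable (fun x => Real.exp (∑ i, a i * (x i - θ i))) (gauss θ) := by
  simp_rw [Real.exp_sum]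
  exact Integrable.fintype_prod (f := fun i y => Real.exp (a i * (y - θ i)))
    fun i => integrable_exp_gauss_one _ _

/-- Density of `N(a, 1)` with respect to `N(b, 1)`. -/
noncomputable def lr (a b x : ℝ) : ℝ := Real.exp ((a - b) * (x - b) - (a - b) ^ 2 / 2)

lemma integrable_lr (a b : ℝ) : Integrable (lr a b) (gaussianReal b 1) := by
  unfold lr
  simp_rw [Real.exp_sub]
  exact (integrable_exp_gauss_one b (a - b)).div_const _

lemma gaussianReal_eq_withDensity (a b : ℝ) :
    gaussianReal a 1 = (gaussianReal b 1).withDensity fun x => ENNReal.ofReal (lr a b x) := by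
  rw [gaussianReal_of_var_ne_zero _ one_ne_zero, gaussianReal_of_var_ne_zero _ one_ne_zero,
    ← withDensity_mul _ (measurable_gaussianPDF _ _) (by unfold lr; fun_prop)]
  congr 1
  ext x
  simp only [Pi.mul_apply, gaussianPDF]
  rw [← ENNReal.ofReal_mul (gaussianPDFReal_nonneg _ _ _)]
  congr 1
  simp only [gaussianPDFReal, lr]
  rw [mul_assoc (√_)⁻¹, ← Real.exp_add]
  congr 2
  simp only [NNReal.coe_one]
  ring

lemma gauss_eq_withDensity (θ η : ι → ℝ) :
    gauss θ = (gauss η).withDensity fun x => ENNReal.ofReal (∏ i, lr (θ i) (η i) (x i)) := by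
  refine Measure.pi_eq fun s hs => ?_
  have hnn : ∀ a b x, 0 ≤ lr a b x := fun a b x => (Real.exp_pos _).le
  rw [withDensity_apply _ (MeasurableSet.univ_pi hs), Measure.restrict_pi_pi,
    ← ofReal_integral_eq_lintegral_ofReal
      (Integrable.fintype_prod (f := fun i y => lr (θ i) (η i) y)
        fun i => (integrable_lr _ _).restrict)
      (.of_forall fun x => Finset.prod_nonneg fun i _ => hnn _ _ _),
    integral_fintype_prod_eq_prod (fun i y => lr (θ i) (η i) y),
    ENNReal.ofReal_prod_of_nonneg fun i _ => integral_nonneg fun x => hnn _ _ _]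
  refine Finset.prod_congr rfl fun i _ => ?_
  rw [ofReal_integral_eq_lintegral_ofReal (integrable_lr _ _).restrict
      (.of_forall fun x => hnn _ _ _), ← withDensity_apply _ (hs i),
    ← gaussianReal_eq_withDensity]

/-- Change of measure at the price of the `χ²`-divergence: the likelihood ratio `ℓ` of `N(θ, I)`
against `N(η, I)` has second moment `exp ‖θ - η‖²`, and
`ℓ f ≤ t / 2 * ℓ ^ 2 + f ^ 2 / (2 * t)`. -/
lemma integral_gauss_le (θ η : ι → ℝ) {f : (ι → ℝ) → ℝ} (hf : Measurable f)
    (h0 : ∀ x, 0 ≤ f x) (h1 : ∀ x, f x ≤ 1) {t s : ℝ} (ht : 0 < t)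
    (hs : ∑ i, (θ i - η i) ^ 2 ≤ s) :
    ∫ x, f x ∂gauss θ ≤ t / 2 * Real.exp s + 1 / (2 * t) * ∫ x, f x ∂gauss η := by
  have hprod : ∀ x : ι → ℝ, ∏ i, lr (θ i) (η i) (x i) =
      Real.exp (∑ i, (θ i - η i) * (x i - η i) - (∑ i, (θ i - η i) ^ 2) / 2) := by
    intro x
    simp only [lr]
    rw [← Real.exp_sum, Finset.sum_sub_distrib, Finset.sum_div]
  have hsq : ∀ x : ι → ℝ, (∏ i, lr (θ i) (η i) (x i)) ^ 2 =
      Real.exp (∑ i, (2 * (θ i - η i)) * (x i - η i)) * Real.exp (-∑ i, (θ i - η i) ^ 2) := by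
    intro x
    rw [hprod, ← Real.exp_nat_mul, ← Real.exp_add]
    simp_rw [mul_assoc]
    rw [← Finset.mul_sum]
    congr 1
    push_cast
    ring
  have hI2 : Integrable (fun x : ι → ℝ => (∏ i, lr (θ i) (η i) (x i)) ^ 2) (gauss η) := by
    simp_rw [hsq]
    exact (integrable_exp_gauss η fun i => 2 * (θ i - η i)).mul_const _
  have hE2 : ∫ x : ι → ℝ, (∏ i, lr (θ i) (η i) (x i)) ^ 2 ∂gauss η ≤ Real.exp s := by
    simp_rw [hsq]
    rw [integral_mul_const, integral_exp_gauss, ← Real.exp_add]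
    simp_rw [mul_pow]
    rw [← Finset.mul_sum]
    apply Real.exp_le_exp.2
    linarith
  have hm : Measurable fun x : ι → ℝ => ∏ i, lr (θ i) (η i) (x i) := by
    simp_rw [hprod]; fun_prop
  have hIf : Integrable f (gauss η) :=
    Integrable.of_bound hf.aestronglyMeasurable 1
      (.of_forall fun x => by rw [Real.norm_eq_abs, abs_of_nonneg (h0 x)]; exact h1 x)
  have hpw : ∀ x, (∏ i, lr (θ i) (η i) (x i)) * f x ≤
      t / 2 * (∏ i, lr (θ i) (η i) (x i)) ^ 2 + 1 / (2 * t) * f x := by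
    intro x
    set p := ∏ i, lr (θ i) (η i) (x i)
    have hff : f x ^ 2 ≤ f x := by nlinarith [h0 x, h1 x]
    have h2 : t / 2 * p ^ 2 + 1 / (2 * t) * f x - p * f x =
        1 / (2 * t) * ((t * p - f x) ^ 2 + (f x - f x ^ 2)) := by
      field_simp; ring
    have : 0 ≤ 1 / (2 * t) * ((t * p - f x) ^ 2 + (f x - f x ^ 2)) := by
      apply mul_nonneg (by positivity)
      nlinarith [sq_nonneg (t * p - f x)]
    linarith
  have hpos : ∀ x : ι → ℝ, 0 ≤ ∏ i, lr (θ i) (η i) (x i) := fun x =>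
    Finset.prod_nonneg fun i _ => (Real.exp_pos _).le
  have hEq : ∫ x, f x ∂gauss θ = ∫ x, (∏ i, lr (θ i) (η i) (x i)) * f x ∂gauss η := by
    rw [gauss_eq_withDensity θ η, integral_withDensity_eq_integral_toReal_smul
      (by fun_prop) (by simp)]
    refine integral_congr_ae (.of_forall fun x => ?_)
    simp only [ENNReal.toReal_ofReal (hpos x), smul_eq_mul]
  rw [hEq]
  have hR : Integrable (fun x => t / 2 * (∏ i, lr (θ i) (η i) (x i)) ^ 2 + 1 / (2 * t) * f x)
    (gauss η) := (hI2.const_mul _).add (hIf.const_mul _)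
  calc _ ≤ ∫ x, t / 2 * (∏ i, lr (θ i) (η i) (x i)) ^ 2 + 1 / (2 * t) * f x ∂gauss η := by
        refine integral_mono_of_nonneg (.of_forall fun x => mul_nonneg (hpos x) (h0 x)) hR
          (.of_forall hpw)
    _ = t / 2 * ∫ x, (∏ i, lr (θ i) (η i) (x i)) ^ 2 ∂gauss η +
          1 / (2 * t) * ∫ x, f x ∂gauss η := by
        rw [integral_add (hI2.const_mul _) (hIf.const_mul _), integral_const_mul,
          integral_const_mul]
    _ ≤ _ := by gcongr

/-! ### Step approximation of monotone integer sequences -/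

/-- The set `{u + f u : u < N}`, which encodes the monotone function `f` on `{0, …, N - 1}`. -/
def code (N K : ℕ) (f : ℕ → ℕ) : Finset (Fin K) :=
  Finset.univ.filter fun m => ∃ u < N, u + f u = m

lemma code_inj {N K k : ℕ} (hK : N + k ≤ K) {f g : ℕ → ℕ} (hf : Monotone f) (hg : Monotone g)
    (hfk : ∀ u, f u ≤ k) (hgk : ∀ u, g u ≤ k) (h : code N K f = code N K g) :
    ∀ u < N, f u = g u := by
  have key : ∀ f g : ℕ → ℕ, Monotone g → (∀ u, f u ≤ k) →
      code N K f = code N K g → ∀ u < N, (∀ v < u, f v = g v) → Monotone f → g u ≤ f u := by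
    intro f g hg hfk h u hu ih hf
    have hlt : u + f u < K := by have := hfk u; omega
    have hmem : (⟨u + f u, hlt⟩ : Fin K) ∈ code N K f := by
      simp only [code, Finset.mem_filter, Finset.mem_univ, true_and]
      exact ⟨u, hu, rfl⟩
    rw [h] at hmem
    simp only [code, Finset.mem_filter, Finset.mem_univ, true_and] at hmem
    obtain ⟨v, hv, he⟩ := hmem
    rcases lt_or_ge v u with hvu | hvu
    · have h1 := ih v hvu
      have h2 := hf hvu.le
      omega
    · have := hg hvu
      omega
  intro u
  induction u using Nat.strong_induction_on with
  | _ u ih =>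
    intro hu
    have ih' : ∀ v < u, f v = g v := fun v hv => ih v hv (hv.trans hu)
    exact le_antisymm
      (key g f hf hgk h.symm u hu (fun v hv => (ih' v hv).symm) hg)
      (key f g hg hfk h u hu ih' hf)

/-- Length of the pieces into which the `j`-th block of length `L` is cut. If the sequence increases
by `d = b (j + 1) - b j` along the block, then at most `d + 1` pieces arise. -/
def pieceLen (L : ℕ) (b : ℕ → ℕ) (j : ℕ) : ℕ := L / (b (j + 1) - b j + 1) + 1

/-- Number of the piece containing the index `i`. The `j`-th block `[j * L, (j + 1) * L)` is cut
into at most `b (j + 1) - b j + 1` pieces, numbered consecutively from `j + b j` on. -/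
def idx (L : ℕ) (b : ℕ → ℕ) (i : ℕ) : ℕ :=
  i / L + b (i / L) + (i % L) / pieceLen L b (i / L)

/-- Value of the step approximation of `q` on the piece number `u`: the largest value that `q`
takes up to the end of that piece. -/
def stepVal (L B : ℕ) (q : ℕ → ℕ) (u : ℕ) : ℕ :=
  ((Finset.range B).filter fun i => idx L (fun j => q (j * L)) i ≤ u).sup q

lemma stepVal_mono (L B : ℕ) (q : ℕ → ℕ) : Monotone (stepVal L B q) := by
  intro u v huv
  refine Finset.sup_mono fun i hi => ?_
  simp only [Finset.mem_filter] at hi ⊢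
  exact ⟨hi.1, hi.2.trans huv⟩

lemma stepVal_le {L B k : ℕ} {q : ℕ → ℕ} (hq : ∀ i, q i ≤ k) (u : ℕ) : stepVal L B q u ≤ k :=
  Finset.sup_le fun i _ => hq i

lemma piece_lt {L : ℕ} (hL : 0 < L) (b : ℕ → ℕ) (i : ℕ) :
    (i % L) / pieceLen L b (i / L) ≤ b (i / L + 1) - b (i / L) := by
  have hp : 0 < pieceLen L b (i / L) := Nat.succ_pos _
  rw [← Nat.lt_succ_iff, Nat.div_lt_iff_lt_mul hp]
  refine (Nat.mod_lt i hL).trans ?_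
  unfold pieceLen
  have := Nat.lt_mul_div_succ L (Nat.succ_pos (b (i / L + 1) - b (i / L)))
  simpa using this

lemma idx_lt_next {L : ℕ} (hL : 0 < L) {b : ℕ → ℕ} (hb : Monotone b) (i : ℕ) :
    idx L b i < i / L + 1 + b (i / L + 1) := by
  have h1 := piece_lt hL b i
  have h2 := hb (Nat.le_succ (i / L))
  unfold idx
  simp only [Nat.succ_eq_add_one] at h2
  omega

lemma le_stepVal {L B : ℕ} {q : ℕ → ℕ} {i : ℕ} (hi : i < B) :
    q i ≤ stepVal L B q (idx L (fun j => q (j * L)) i) :=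
  Finset.le_sup (f := q) (by simp [hi])

/-- The end of the piece of `i` is at distance less than the piece length from `i`, and not
beyond the end of the block of `i`. -/
lemma stepVal_idx_le {L B : ℕ} (hL : 0 < L) {q : ℕ → ℕ} (hq : Monotone q) (i : ℕ) :
    stepVal L B q (idx L (fun j => q (j * L)) i) ≤
      q (min (i + pieceLen L (fun j => q (j * L)) (i / L)) ((i / L + 1) * L)) := by
  set b : ℕ → ℕ := fun j => q (j * L) with hbdef
  have hb : Monotone b := fun x y hxy => hq (Nat.mul_le_mul_right L hxy)
  refine Finset.sup_le fun i' hi' => hq ?_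
  have hle : idx L b i' ≤ idx L b i := (Finset.mem_filter.1 hi').2
  have hblock : i' / L ≤ i / L := by
    by_contra! hcon
    have h1 := idx_lt_next hL hb i
    have h2 := hb (show i / L + 1 ≤ i' / L from hcon)
    have h3 : i' / L + b (i' / L) ≤ idx L b i' := Nat.le_add_right _ _
    omega
  have hend : i' < (i / L + 1) * L := by
    rw [← Nat.div_lt_iff_lt_mul hL]; omega
  refine le_min ?_ hend.le
  by_contra! hcon
  have hge : i / L ≤ i' / L := Nat.div_le_div_right (by omega)
  have heq : i' / L = i / L := le_antisymm hblock hge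
  have hm : i % L + pieceLen L b (i / L) ≤ i' % L := by
    have h1 := Nat.div_add_mod i L
    have h2 := Nat.div_add_mod i' L
    rw [heq] at h2
    omega
  have hp : 0 < pieceLen L b (i / L) := Nat.succ_pos _
  have h4 : i % L / pieceLen L b (i / L) + 1 ≤ i' % L / pieceLen L b (i / L) := by
    rw [← Nat.add_div_right _ hp]
    exact Nat.div_le_div_right hm
  unfold idx at hle
  rw [heq] at hle
  omega

/-- Telescoping: the increments of a monotone function over windows of length `l` add up to at
most `l` times its total increment. -/
lemma sum_window (g : ℕ → ℕ) {A B : ℕ} (hA : ∀ t, A ≤ g t) (hB : ∀ t, g t ≤ B) (L l : ℕ) :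
    ∑ t ∈ Finset.range L, ((g (t + l) : ℤ) - g t) ≤ l * ((B : ℤ) - A) := by
  have h1 := Finset.sum_range_add (fun t => (g t : ℤ)) l L
  have h2 := Finset.sum_range_add (fun t => (g t : ℤ)) L l
  rw [add_comm L l, h1] at h2
  have h3 : ∑ t ∈ Finset.range l, ((g (L + t) : ℤ) - g t) ≤ ∑ t ∈ Finset.range l, ((B : ℤ) - A) := by
    refine Finset.sum_le_sum fun t _ => ?_
    have := hA t
    have := hB (L + t)
    omega
  rw [Finset.sum_sub_distrib, Finset.sum_const, Finset.card_range, nsmul_eq_mul] at h3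
  rw [Finset.sum_sub_distrib]
  simp_rw [add_comm _ l]
  linarith

/-- The step approximation of a `{0, …, k}`-valued monotone sequence of length `k ^ 3`, cut into
`k` blocks of length `k ^ 2`, has squared error at most `2 * k ^ 3`. -/
lemma sum_stepVal_sq {k : ℕ} (hk : 0 < k) {q : ℕ → ℕ} (hq : Monotone q) (hqk : ∀ i, q i ≤ k) :
    ∑ i ∈ Finset.range (k * k ^ 2),
      ((stepVal (k ^ 2) (k * k ^ 2) q (idx (k ^ 2) (fun j => q (j * k ^ 2)) i) : ℤ) - q i) ^ 2
      ≤ 2 * k ^ 3 := by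
  set L := k ^ 2 with hLdef
  have hL : 0 < L := by positivity
  set b : ℕ → ℕ := fun j => q (j * L) with hbdef
  have hb : Monotone b := fun x y hxy => hq (Nat.mul_le_mul_right L hxy)
  have hblock : ∀ j < k, ∑ t ∈ Finset.range L,
      ((stepVal L (k * L) q (idx L b (j * L + t)) : ℤ) - q (j * L + t)) ^ 2 ≤
      ((k : ℤ) ^ 2 + k) * ((b (j + 1) : ℤ) - b j) := by
    intro j hj
    have hbj : b j ≤ b (j + 1) := hb (Nat.le_succ j)
    have hbk : b (j + 1) ≤ k := hqk _
    set d := b (j + 1) - b j with hd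
    set g : ℕ → ℕ := fun t => q (min (j * L + t) ((j + 1) * L)) with hg
    have hgA : ∀ t, b j ≤ g t := by
      intro t
      refine hq (le_min (by omega) ?_)
      exact Nat.mul_le_mul_right L (Nat.le_succ j)
    have hgB : ∀ t, g t ≤ b (j + 1) := fun t => hq (min_le_right _ _)
    have hterm : ∀ t ∈ Finset.range L,
        ((stepVal L (k * L) q (idx L b (j * L + t)) : ℤ) - q (j * L + t)) ^ 2 ≤
          d * ((g (t + pieceLen L b j) : ℤ) - g t) := by
      intro t ht
      have htL : t < L := Finset.mem_range.1 ht
      have hdiv : (j * L + t) / L = j := by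
        rw [mul_comm, Nat.mul_add_div hL, Nat.div_eq_of_lt htL, add_zero]
      have hlt : j * L + t < k * L := by
        have : (j + 1) * L ≤ k * L := Nat.mul_le_mul_right L hj
        rw [add_mul, one_mul] at this
        omega
      have hgt : g t = q (j * L + t) := by
        simp only [hg]
        congr 1
        rw [add_mul, one_mul]
        omega
      have h1 : q (j * L + t) ≤ stepVal L (k * L) q (idx L b (j * L + t)) := le_stepVal hlt
      have h2 : stepVal L (k * L) q (idx L b (j * L + t)) ≤ g (t + pieceLen L b j) := by
        have := stepVal_idx_le (B := k * L) hL hq (j * L + t)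
        rw [hdiv] at this
        simpa only [hg, add_assoc] using this
      have h3 := hgA t
      have h4 := hgB (t + pieceLen L b j)
      rw [hgt] at h3 ⊢
      set e := stepVal L (k * L) q (idx L b (j * L + t))
      zify [hbj] at hd
      rw [hd, sq]
      zify at h1 h2 h3 h4
      apply mul_le_mul <;> linarith
    refine (Finset.sum_le_sum hterm).trans ?_
    rw [← Finset.mul_sum]
    have hw := sum_window g hgA hgB L (pieceLen L b j)
    have hdz : (d : ℤ) = (b (j + 1) : ℤ) - b j := by rw [hd]; push_cast [hbj]; ring
    rw [← hdz] at hw ⊢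
    have hlen : d * pieceLen L b j ≤ k ^ 2 + k := by
      have h1 : d * (L / (d + 1)) ≤ L :=
        (Nat.mul_le_mul_right _ (Nat.le_succ d)).trans (Nat.mul_div_le L (d + 1))
      have h2 : pieceLen L b j = L / (d + 1) + 1 := rfl
      rw [h2, mul_add, mul_one]
      omega
    zify at hlen
    calc _ ≤ (d : ℤ) * (pieceLen L b j * d) := mul_le_mul_of_nonneg_left hw (by positivity)
      _ = (d * pieceLen L b j) * d := by ring
      _ ≤ _ := mul_le_mul_of_nonneg_right hlen (by positivity)
  have hsplit : ∀ (F : ℕ → ℤ) (m : ℕ), ∑ i ∈ Finset.range (m * L), F i =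
      ∑ j ∈ Finset.range m, ∑ t ∈ Finset.range L, F (j * L + t) := by
    intro F m
    induction m with
    | zero => simp
    | succ m ih => rw [add_mul, one_mul, Finset.sum_range_add, ih, Finset.sum_range_succ]
  rw [hsplit]
  refine (Finset.sum_le_sum fun j hj => hblock j (Finset.mem_range.1 hj)).trans ?_
  rw [← Finset.mul_sum, Finset.sum_range_sub (fun j => (b j : ℤ))]
  have h1 : (b k : ℤ) ≤ k := by exact_mod_cast hqk _
  have h2 : (0 : ℤ) ≤ b 0 := by positivity
  have h3 : (1 : ℤ) ≤ k := by exact_mod_cast hk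
  calc ((k : ℤ) ^ 2 + k) * (b k - b 0) ≤ ((k : ℤ) ^ 2 + k) * k :=
        mul_le_mul_of_nonneg_left (by linarith) (by positivity)
    _ ≤ 2 * (k : ℤ) ^ 3 := by nlinarith [mul_nonneg (sq_nonneg (k:ℤ)) (sub_nonneg.2 h3)]

/-! ### A finite net of the monotone vectors -/

/-- The parameter space of isotonic regression: monotone vectors in `[0, 1] ^ n`. -/
abbrev Iso (n : ℕ) : Type := {θ : Fin n → ℝ // (∀ i, 0 ≤ θ i ∧ θ i ≤ 1) ∧ Monotone θ}

/-- The vector `θ` rounded down to multiples of `1 / k`, in units of `1 / k`, and continued by the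
maximal value `k` beyond `n`. -/
noncomputable def quant {n : ℕ} (k : ℕ) (θ : Iso n) (i : ℕ) : ℕ :=
  if h : i < n then ⌊(k : ℝ) * θ.1 ⟨i, h⟩⌋₊ else k

lemma quant_le {n : ℕ} (k : ℕ) (θ : Iso n) (i : ℕ) : quant k θ i ≤ k := by
  unfold quant
  split_ifs with h
  · apply Nat.floor_le_of_le
    have := (θ.2.1 ⟨i, h⟩).2
    have hk : (0 : ℝ) ≤ k := Nat.cast_nonneg k
    nlinarith
  · exact le_rfl

lemma quant_mono {n : ℕ} (k : ℕ) (θ : Iso n) : Monotone (quant k θ) := by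
  intro i j hij
  by_cases hj : j < n
  · have hi : i < n := lt_of_le_of_lt hij hj
    simp only [quant, hi, hj, dif_pos]
    apply Nat.floor_le_floor
    exact mul_le_mul_of_nonneg_left (θ.2.2 (by simpa using hij)) (Nat.cast_nonneg k)
  · have : quant k θ j = k := by simp [quant, hj]
    rw [this]
    exact quant_le k θ i

/-- The code of `θ`: the rounded values at the block boundaries, which determine the partition
into pieces, and the values of the step approximation on the pieces. -/
noncomputable def enc {n : ℕ} (k : ℕ) (θ : Iso n) : Finset (Fin (3 * k)) × Finset (Fin (3 * k)) :=
  (code (k + 1) (3 * k) fun j => quant k θ (j * k ^ 2),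
    code (2 * k) (3 * k) (stepVal (k ^ 2) (k * k ^ 2) (quant k θ)))

lemma idx_lt {k : ℕ} (hk : 0 < k) {b : ℕ → ℕ} (hb : Monotone b) (hbk : ∀ j, b j ≤ k) {i : ℕ}
    (hi : i < k * k ^ 2) : idx (k ^ 2) b i < 2 * k := by
  have hL : 0 < k ^ 2 := by positivity
  have h1 := idx_lt_next hL hb i
  have h2 : i / k ^ 2 < k := (Nat.div_lt_iff_lt_mul hL).2 hi
  have := hbk (i / k ^ 2 + 1)
  omega

lemma idx_congr {k : ℕ} (hk : 0 < k) {b b' : ℕ → ℕ} (h : ∀ j < k + 1, b j = b' j) {i : ℕ}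
    (hi : i < k * k ^ 2) : idx (k ^ 2) b i = idx (k ^ 2) b' i := by
  have hL : 0 < k ^ 2 := by positivity
  have h2 : i / k ^ 2 < k := (Nat.div_lt_iff_lt_mul hL).2 hi
  have e1 := h (i / k ^ 2) (by omega)
  have e2 := h (i / k ^ 2 + 1) (by omega)
  simp only [idx, pieceLen, e1, e2]

lemma sum_fin_le {n N : ℕ} (hn : n ≤ N) (F : ℕ → ℝ) (hF : ∀ i, 0 ≤ F i) :
    ∑ i : Fin n, F i ≤ ∑ i ∈ Finset.range N, F i := by
  rw [Fin.sum_univ_eq_sum_range F]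
  exact Finset.sum_le_sum_of_subset_of_nonneg (Finset.range_mono hn) fun i _ _ => hF i

/-- Vectors with the same code have the same step approximation, hence are close to each other. -/
lemma dist_of_enc_eq {n k : ℕ} (hk : 0 < k) (hn : n ≤ k ^ 3) {θ η : Iso n}
    (h : enc k θ = enc k η) : ∑ i, (θ.1 i - η.1 i) ^ 2 ≤ 12 * k := by
  obtain ⟨h1, h2⟩ := Prod.mk.inj h
  have hbm : ∀ ζ : Iso n, Monotone fun j => quant k ζ (j * k ^ 2) := fun ζ x y hxy =>
    quant_mono k ζ (Nat.mul_le_mul_right _ hxy)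
  have hb := code_inj (k := k) (by omega) (hbm θ) (hbm η) (fun _ => quant_le _ _ _)
    (fun _ => quant_le _ _ _) h1
  have hs := code_inj (k := k) (by omega) (stepVal_mono _ _ _) (stepVal_mono _ _ _)
    (stepVal_le (quant_le k θ)) (stepVal_le (quant_le k η)) h2
  have hkk : k * k ^ 2 = k ^ 3 := by ring
  -- The common step approximation.
  set S : ℕ → ℕ := fun i => stepVal (k ^ 2) (k * k ^ 2) (quant k θ)
    (idx (k ^ 2) (fun j => quant k θ (j * k ^ 2)) i) with hS
  have hSη : ∀ i < k * k ^ 2, S i = stepVal (k ^ 2) (k * k ^ 2) (quant k η)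
      (idx (k ^ 2) (fun j => quant k η (j * k ^ 2)) i) := by
    intro i hi
    simp only [hS]
    rw [hs _ (idx_lt hk (hbm θ) (fun _ => quant_le _ _ _) hi), idx_congr hk hb hi]
  have happ : ∀ ζ : Iso n, (∀ i < k * k ^ 2, S i = stepVal (k ^ 2) (k * k ^ 2) (quant k ζ)
      (idx (k ^ 2) (fun j => quant k ζ (j * k ^ 2)) i)) →
      ∑ i : Fin n, ((k : ℝ) * ζ.1 i - S i) ^ 2 ≤ 3 * (k : ℝ) ^ 3 := by
    intro ζ hζ
    have hsum := sum_stepVal_sq hk (quant_mono k ζ) (quant_le k ζ)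
    have hsum' : ∑ i ∈ Finset.range (k * k ^ 2), ((S i : ℝ) - quant k ζ i) ^ 2 ≤
        2 * (k : ℝ) ^ 3 := by
      have : ∑ i ∈ Finset.range (k * k ^ 2), ((S i : ℤ) - quant k ζ i) ^ 2 ≤
          2 * (k : ℤ) ^ 3 := by
        refine le_trans (le_of_eq (Finset.sum_congr rfl fun i hi => ?_)) hsum
        rw [hζ i (Finset.mem_range.1 hi)]
      exact_mod_cast this
    have hpt : ∀ i : Fin n, ((k : ℝ) * ζ.1 i - S i) ^ 2 ≤
        1 + ((S i : ℝ) - quant k ζ i) ^ 2 := by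
      intro i
      have hi : (i : ℕ) < k * k ^ 2 := by have := i.2; omega
      have hq : quant k ζ i = ⌊(k : ℝ) * ζ.1 i⌋₊ := by simp [quant]
      have h0 : 0 ≤ (k : ℝ) * ζ.1 i := mul_nonneg (Nat.cast_nonneg k) (ζ.2.1 i).1
      have hl := Nat.floor_le h0
      have hu := Nat.lt_floor_add_one ((k : ℝ) * ζ.1 i)
      rw [← hq] at hl hu
      have hge : (quant k ζ i : ℝ) ≤ S i := by
        rw [hζ i hi]
        exact_mod_cast le_stepVal (L := k ^ 2) (q := quant k ζ) hi
      nlinarith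
    calc _ ≤ ∑ i : Fin n, (1 + ((S i : ℝ) - quant k ζ i) ^ 2) := Finset.sum_le_sum fun i _ => hpt i
      _ ≤ ∑ i ∈ Finset.range (k * k ^ 2), (1 + ((S i : ℝ) - quant k ζ i) ^ 2) :=
          sum_fin_le (by omega) (fun i => 1 + ((S i : ℝ) - quant k ζ i) ^ 2)
            fun i => by positivity
      _ = (k : ℝ) ^ 3 + ∑ i ∈ Finset.range (k * k ^ 2), ((S i : ℝ) - quant k ζ i) ^ 2 := by
          rw [Finset.sum_add_distrib]
          simp only [Finset.sum_const, Finset.card_range, nsmul_eq_mul, mul_one, hkk]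
          push_cast
          ring
      _ ≤ _ := by linarith
  have hθ := happ θ fun i _ => rfl
  have hη := happ η hSη
  have hkR : (0 : ℝ) < k := by exact_mod_cast hk
  have hcomb : (k : ℝ) ^ 2 * ∑ i, (θ.1 i - η.1 i) ^ 2 ≤ (k : ℝ) ^ 2 * (12 * k) := by
    rw [Finset.mul_sum]
    calc _ ≤ ∑ i : Fin n, (2 * ((k : ℝ) * θ.1 i - S i) ^ 2 + 2 * ((k : ℝ) * η.1 i - S i) ^ 2) := by
          refine Finset.sum_le_sum fun i _ => ?_
          nlinarith [sq_nonneg (((k : ℝ) * θ.1 i - S i) + ((k : ℝ) * η.1 i - S i))]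
      _ ≤ _ := by
          rw [Finset.sum_add_distrib, ← Finset.mul_sum, ← Finset.mul_sum]
          linarith
  exact le_of_mul_le_mul_left hcomb (by positivity)

/-- A net of the parameter space whose log-cardinality and squared radius are both of order `k`. -/
lemma exists_net {n k : ℕ} (hk : 0 < k) (hn : n ≤ k ^ 3) :
    ∃ N : Finset (Iso n), (N.card : ℝ) ≤ Real.exp (6 * k) ∧
      ∀ θ : Iso n, ∃ η ∈ N, ∑ i, (η.1 i - θ.1 i) ^ 2 ≤ 12 * k := by
  classical
  have hfin : (Set.range (enc (n := n) k)).Finite := Set.toFinite _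
  -- One parameter is picked for each code in use.
  choose f hf using fun c : Set.range (enc (n := n) k) => c.2
  refine ⟨Finset.univ.image f, ?_, fun θ => ⟨f ⟨enc k θ, θ, rfl⟩, ?_, ?_⟩⟩
  · have h1 : (Finset.univ.image f).card ≤ 2 ^ (6 * k) := by
      refine Finset.card_image_le.trans ?_
      rw [Finset.card_univ]
      refine (Fintype.card_subtype_le _).trans ?_
      simp only [Fintype.card_prod, Fintype.card_finset, Fintype.card_fin]
      rw [← pow_add]
      apply le_of_eq; ring_nf
    calc ((Finset.univ.image f).card : ℝ) ≤ ((2 ^ (6 * k) : ℕ) : ℝ) := by exact_mod_cast h1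
      _ = 2 ^ (6 * k) := by push_cast; rfl
      _ ≤ Real.exp 1 ^ (6 * k) := by
          apply pow_le_pow_left₀ (by norm_num)
          linarith [Real.add_one_le_exp 1]
      _ = _ := by rw [← Real.exp_nat_mul]; push_cast; ring_nf
  · exact Finset.mem_image_of_mem _ (Finset.mem_univ _)
  · exact dist_of_enc_eq hk hn (hf _)

/-! ### Bounds of the minimax quantile -/

section Quantile

variable {Θ 𝒳 : Type*} [MeasurableSpace Θ] [MeasurableSpace 𝒳]

lemma minimaxQuantile_le {μ : Θ → Measure 𝒳} {L : Θ → Θ → ℝ} {δ R : ℝ} {T : 𝒳 → Θ}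
    (hT : Measurable T)
    (h : ∀ θ, ENNReal.ofReal (1 - δ) ≤ μ θ {x | L (T x) θ ≤ R}) :
    minimaxQuantile (fun θ => {μ θ}) L δ ≤ ENNReal.ofReal R := by
  refine (iInf_le _ ⟨T, hT⟩).trans (iSup_le fun θ => iSup₂_le fun P hP => sInf_le ?_)
  rw [Set.mem_singleton_iff.1 hP]
  exact (h θ).trans (measure_mono fun x hx => ENNReal.ofReal_le_ofReal hx)

lemma le_minimaxQuantile {μ : Θ → Measure 𝒳} {L : Θ → Θ → ℝ} {δ R : ℝ}
    (h : ∀ T : 𝒳 → Θ, Measurable T →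
      ¬ ∀ θ, ENNReal.ofReal (1 - δ) ≤ μ θ {x | L (T x) θ < R}) :
    ENNReal.ofReal R ≤ minimaxQuantile (fun θ => {μ θ}) L δ := by
  refine le_iInf fun T => ?_
  by_contra! hcon
  refine h T.1 T.2 fun θ => ?_
  have h1 := (le_iSup₂ (f := fun P (_ : P ∈ ({μ θ} : Set (Measure 𝒳))) =>
    sInf {r : ℝ≥0∞ | ENNReal.ofReal (1 - δ) ≤ P {x | ENNReal.ofReal (L (T.1 x) θ) ≤ r}})
    (μ θ) rfl)
  have h2 := (h1.trans (le_iSup (fun θ => ⨆ P ∈ ({μ θ} : Set (Measure 𝒳)),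
    sInf {r : ℝ≥0∞ | ENNReal.ofReal (1 - δ) ≤ P {x | ENNReal.ofReal (L (T.1 x) θ) ≤ r}}) θ)
    ).trans_lt hcon
  obtain ⟨r, hr, hrR⟩ := sInf_lt_iff.1 h2
  refine hr.trans (measure_mono fun x hx => ?_)
  exact (ENNReal.ofReal_lt_ofReal_iff').1 (lt_of_le_of_lt hx hrR) |>.1

end Quantile

/-! ### Least squares over a net -/

/-- A measurable choice of a least squares estimator over a finite set. -/
lemma exists_lse {n : ℕ} (N : Finset (Iso n)) (hN : N.Nonempty) :
    ∃ T : (Fin n → ℝ) → Iso n, Measurable T ∧ (∀ x, T x ∈ N) ∧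
      ∀ x, ∀ t ∈ N, ∑ i, (x i - (T x).1 i) ^ 2 ≤ ∑ i, (x i - t.1 i) ^ 2 := by
  classical
  induction hN using Finset.Nonempty.cons_induction with
  | singleton a => exact ⟨fun _ => a, measurable_const, by simp, by simp⟩
  | cons a s ha hs ih =>
    obtain ⟨T, hT, hTs, hmin⟩ := ih
    have hTi : ∀ i, Measurable fun x => (T x).1 i := fun i =>
      (measurable_pi_apply i).comp (measurable_subtype_coe.comp hT)
    refine ⟨fun x => if ∑ i, (x i - a.1 i) ^ 2 ≤ ∑ i, (x i - (T x).1 i) ^ 2 then a else T x,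
      Measurable.ite (measurableSet_le (by fun_prop) (by fun_prop)) measurable_const hT, ?_, ?_⟩
    · intro x
      dsimp only
      split_ifs
      · simp
      · simp [hTs x]
    · intro x t ht
      dsimp only
      rcases Finset.mem_cons.1 ht with rfl | ht
      · split_ifs with h
        · exact le_rfl
        · exact (not_le.1 h).le
      · split_ifs with h
        · exact h.trans (hmin x t ht)
        · exact hmin x t ht

lemma measurable_loss {n : ℕ} {T : (Fin n → ℝ) → Iso n} (hT : Measurable T) (η : Fin n → ℝ) :
    Measurable fun x => ∑ i, ((T x).1 i - η i) ^ 2 := by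
  have hTi : ∀ i, Measurable fun x => (T x).1 i := fun i =>
    (measurable_pi_apply i).comp (measurable_subtype_coe.comp hT)
  fun_prop

/-- Deterministic inequality behind the risk bound: least squares over a set containing `η`
satisfies `‖t - θ‖² ≤ ‖η - θ‖² + 2 ⟪x - θ, t - η⟫`, so a bound of the noise term by
`‖t - η‖² / 32 + c` (after division by four) yields the rate. -/
lemma lse_bound {n : ℕ} {x t η θ : Fin n → ℝ} {D c : ℝ}
    (hls : ∑ i, (x i - t i) ^ 2 ≤ ∑ i, (x i - η i) ^ 2)
    (hη : ∑ i, (η i - θ i) ^ 2 ≤ D)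
    (hnoise : ∑ i, ((t i - η i) / 4) * (x i - θ i) - (∑ i, ((t i - η i) / 4) ^ 2) / 2 ≤ c) :
    ∑ i, (t i - θ i) ^ 2 ≤ 3 * D + 16 * c := by
  have key : ∑ i, (t i - θ i) ^ 2 ≤ 3 * ∑ i, (η i - θ i) ^ 2 +
      2 * (∑ i, (x i - t i) ^ 2 - ∑ i, (x i - η i) ^ 2) +
      16 * (∑ i, ((t i - η i) / 4) * (x i - θ i) - (∑ i, ((t i - η i) / 4) ^ 2) / 2) := by
    rw [Finset.sum_div, ← Finset.sum_sub_distrib, ← Finset.sum_sub_distrib, Finset.mul_sum,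
      Finset.mul_sum, Finset.mul_sum, ← Finset.sum_add_distrib, ← Finset.sum_add_distrib]
    refine Finset.sum_le_sum fun i _ => ?_
    nlinarith [sq_nonneg (t i - θ i + (η i - θ i))]
  linarith

/-- Least squares over a finite net: the squared error is of the order of the squared radius of
the net plus its log-cardinality plus `log (1 / δ)`, with probability at least `1 - δ`. -/
lemma lse_prob {n : ℕ} {N : Finset (Iso n)} {D c δ : ℝ} (hδ : 0 < δ)
    (hcard : (N.card : ℝ) ≤ Real.exp c) {T : (Fin n → ℝ) → Iso n}
    (hTN : ∀ x, T x ∈ N)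
    (hls : ∀ x, ∀ t ∈ N, ∑ i, (x i - (T x).1 i) ^ 2 ≤ ∑ i, (x i - t.1 i) ^ 2)
    (θ : Iso n) (hnet : ∃ η ∈ N, ∑ i, (η.1 i - θ.1 i) ^ 2 ≤ D) :
    ENNReal.ofReal (1 - δ) ≤ gauss θ.1
      {x | ∑ i, ((T x).1 i - θ.1 i) ^ 2 ≤ 3 * D + 16 * (c + Real.log (1 / δ))} := by
  obtain ⟨η, hηN, hη⟩ := hnet
  set a : Iso n → Fin n → ℝ := fun t i => (t.1 i - η.1 i) / 4 with ha
  set Y : Iso n → (Fin n → ℝ) → ℝ := fun t x =>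
    Real.exp (∑ i, a t i * (x i - θ.1 i) - (∑ i, a t i ^ 2) / 2) with hY
  have hYeq : ∀ t, Y t = fun x => Real.exp (∑ i, a t i * (x i - θ.1 i)) /
      Real.exp ((∑ i, a t i ^ 2) / 2) := by
    intro t; ext x; simp only [hY]; rw [Real.exp_sub]
  have hYint : ∀ t, Integrable (Y t) (gauss θ.1) := by
    intro t; rw [hYeq]; exact (integrable_exp_gauss θ.1 (a t)).div_const _
  have hYone : ∀ t, ∫ x, Y t x ∂gauss θ.1 = 1 := by
    intro t
    rw [hYeq, integral_div, integral_exp_gauss, div_self (Real.exp_pos _).ne']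
  have hYpos : ∀ t x, 0 < Y t x := fun t x => Real.exp_pos _
  have hZint : Integrable (fun x => ∑ t ∈ N, Y t x) (gauss θ.1) :=
    integrable_finsetSum N fun t _ => hYint t
  have hZ : ∫ x, ∑ t ∈ N, Y t x ∂gauss θ.1 ≤ Real.exp c := by
    rw [integral_finsetSum N fun t _ => hYint t]
    simpa [hYone] using hcard
  set B : Set (Fin n → ℝ) := {x | Real.exp c / δ ≤ ∑ t ∈ N, Y t x} with hB
  have hBm : MeasurableSet B := measurableSet_le measurable_const (by fun_prop)
  have hmarkov := mul_meas_ge_le_integral_of_nonneg (μ := gauss θ.1)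
    (.of_forall fun x => Finset.sum_nonneg fun t _ => (hYpos t x).le) hZint (Real.exp c / δ)
  have hPB : (gauss θ.1).real B ≤ δ := by
    have h1 : Real.exp c / δ * (gauss θ.1).real B ≤ Real.exp c := hmarkov.trans hZ
    rw [div_mul_eq_mul_div, div_le_iff₀ hδ] at h1
    exact le_of_mul_le_mul_left h1 (Real.exp_pos c)
  have hPBc : 1 - δ ≤ (gauss θ.1).real Bᶜ := by
    rw [probReal_compl_eq_one_sub hBm]; linarith
  calc ENNReal.ofReal (1 - δ) ≤ ENNReal.ofReal ((gauss θ.1).real Bᶜ) :=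
        ENNReal.ofReal_le_ofReal hPBc
    _ = gauss θ.1 Bᶜ := ofReal_measureReal
    _ ≤ _ := measure_mono fun x hx => ?_
  have hx' : ∑ t ∈ N, Y t x < Real.exp c / δ := not_le.1 hx
  have h1 : Y (T x) x < Real.exp c / δ :=
    (Finset.single_le_sum (f := fun t => Y t x) (fun t _ => (hYpos t x).le) (hTN x)).trans_lt hx'
  have h2 : Real.exp c / δ = Real.exp (c + Real.log (1 / δ)) := by
    rw [Real.exp_add, Real.exp_log (by positivity), mul_one_div]
  rw [h2] at h1
  exact lse_bound (hls x η hηN) hη (Real.exp_lt_exp.1 h1).le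

lemma upper_bound {n k : ℕ} (hk : 0 < k) (hn : n ≤ k ^ 3) (hn0 : 0 < n) {δ : ℝ} (hδ : 0 < δ) :
    minimaxQuantile (fun θ : Iso n => {gauss θ.1})
      (fun θ₁ θ₂ => (∑ i, (θ₁.1 i - θ₂.1 i) ^ 2) / n) δ ≤
      ENNReal.ofReal (min ((132 * k + 16 * Real.log (1 / δ)) / n) 1) := by
  obtain ⟨N, hcard, hnet⟩ := exists_net hk hn
  have hne : N.Nonempty := by
    obtain ⟨η, hη, -⟩ := hnet ⟨fun _ => 0, by simp, fun _ _ _ => le_rfl⟩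
    exact ⟨η, hη⟩
  obtain ⟨T, hT, hTN, hls⟩ := exists_lse N hne
  have hnR : (0 : ℝ) < n := by exact_mod_cast hn0
  refine minimaxQuantile_le (μ := fun θ : Iso n => gauss θ.1) hT fun θ => ?_
  refine (lse_prob hδ hcard hTN hls θ (hnet θ)).trans (measure_mono fun x hx => ?_)
  have hx' : ∑ i, ((T x).1 i - θ.1 i) ^ 2 ≤
      3 * (12 * k) + 16 * (6 * k + Real.log (1 / δ)) := hx
  change (∑ i, ((T x).1 i - θ.1 i) ^ 2) / n ≤ min _ 1
  refine le_min ?_ ?_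
  · refine div_le_div_of_nonneg_right ?_ hnR.le
    linarith
  · rw [div_le_one hnR]
    calc ∑ i, ((T x).1 i - θ.1 i) ^ 2 ≤ ∑ i : Fin n, (1 : ℝ) := by
          refine Finset.sum_le_sum fun i _ => ?_
          have h1 := (T x).2.1 i
          have h2 := θ.2.1 i
          nlinarith
      _ = n := by simp

/-! ### Two-point lower bound -/

/-- The lower bound for the deviation term, from the two constant vectors `0` and `h`. -/
lemma lower_bound_two_point {n : ℕ} (hn0 : 0 < n) {δ : ℝ} (hδ : 0 < δ) (hδ' : δ ≤ 1 / 4) :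
    ENNReal.ofReal (min (Real.log (1 / δ) / (2 * n)) 1 / 4) ≤
      minimaxQuantile (fun θ : Iso n => {gauss θ.1})
        (fun θ₁ θ₂ => (∑ i, (θ₁.1 i - θ₂.1 i) ^ 2) / n) δ := by
  have hnR : (0 : ℝ) < n := by exact_mod_cast hn0
  set l := Real.log (1 / δ) with hl
  have hlpos : 0 < l := Real.log_pos (by rw [lt_div_iff₀ hδ]; linarith)
  set w := min (l / (2 * n)) 1 with hw
  have hw0 : 0 ≤ w := by positivity
  have hw1 : w ≤ 1 := min_le_right _ _
  have hwl : n * w ≤ l / 2 := by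
    calc n * w ≤ n * (l / (2 * n)) := mul_le_mul_of_nonneg_left (min_le_left _ _) hnR.le
      _ = l / 2 := by field_simp
  set h := √w with hh
  have hsq : h ^ 2 = w := Real.sq_sqrt hw0
  have hh1 : h ≤ 1 := by nlinarith [Real.sqrt_nonneg w]
  refine le_minimaxQuantile (μ := fun θ : Iso n => gauss θ.1) fun T hT hcon => ?_
  set θ₀ : Iso n := ⟨fun _ => 0, by simp, fun _ _ _ => le_rfl⟩ with hθ₀
  set θ₁ : Iso n := ⟨fun _ => h, fun _ => ⟨Real.sqrt_nonneg _, hh1⟩, fun _ _ _ => le_rfl⟩ with hθ₁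
  have hset : ∀ η : Iso n, MeasurableSet {x | (∑ i, ((T x).1 i - η.1 i) ^ 2) / n < w / 4} :=
    fun η => measurableSet_lt ((measurable_loss hT η.1).div_const _) measurable_const
  set A : Set (Fin n → ℝ) := {x | (∑ i, ((T x).1 i - θ₀.1 i) ^ 2) / n < w / 4} with hA
  set B : Set (Fin n → ℝ) := {x | (∑ i, ((T x).1 i - θ₁.1 i) ^ 2) / n < w / 4} with hB
  have hPA : 1 - δ ≤ (gauss θ₀.1).real A :=
    (ENNReal.ofReal_le_iff_le_toReal (measure_ne_top _ _)).1 (hcon θ₀)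
  have hPB : 1 - δ ≤ (gauss θ₁.1).real B :=
    (ENNReal.ofReal_le_iff_le_toReal (measure_ne_top _ _)).1 (hcon θ₁)
  have hsub : A ⊆ Bᶜ := by
    intro x hxA hxB
    have h1 : (∑ i, ((T x).1 i - 0) ^ 2) / n < w / 4 := hxA
    have h2 : (∑ i, ((T x).1 i - h) ^ 2) / n < w / 4 := hxB
    rw [div_lt_iff₀ hnR] at h1 h2
    have h3 : ∑ _i : Fin n, w ≤
        ∑ i, (2 * ((T x).1 i - 0) ^ 2 + 2 * ((T x).1 i - h) ^ 2) := by
      refine Finset.sum_le_sum fun i _ => ?_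
      rw [← hsq]
      nlinarith [sq_nonneg (2 * (T x).1 i - h)]
    rw [Finset.sum_add_distrib, ← Finset.mul_sum, ← Finset.mul_sum, Finset.sum_const,
      Finset.card_univ, Fintype.card_fin, nsmul_eq_mul] at h3
    linarith
  have hPA1 : (gauss θ₁.1).real A ≤ δ := by
    have h1 := measureReal_mono (μ := gauss θ₁.1) hsub
    rw [probReal_compl_eq_one_sub (hset θ₁)] at h1
    linarith
  -- With `u = δ ^ (1 / 4)` the change of measure at `t = u ^ 3` reads `1 - u ^ 4 ≤ u`.
  set u := Real.exp (-(l / 4)) with hu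
  have hu0 : 0 < u := Real.exp_pos _
  have hu4 : u ^ 4 = δ := by
    rw [hu, ← Real.exp_nat_mul]
    have : ((4 : ℕ) : ℝ) * -(l / 4) = -l := by push_cast; ring
    rw [this, hl, one_div, Real.log_inv, neg_neg, Real.exp_log hδ]
  have hexp : Real.exp (l / 2) * u ^ 2 = 1 := by
    rw [hu, ← Real.exp_nat_mul, ← Real.exp_add]
    have : l / 2 + ((2 : ℕ) : ℝ) * -(l / 4) = 0 := by push_cast; ring
    rw [this, Real.exp_zero]
  have hmain := integral_gauss_le θ₀.1 θ₁.1 (f := A.indicator 1)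
    (measurable_one.indicator (hset θ₀)) (fun x => Set.indicator_nonneg (by simp) x)
    (fun x => Set.indicator_le_self' (by simp) x) (t := u ^ 3) (s := l / 2) (by positivity)
    (by simpa [hθ₀, hθ₁, hsq] using hwl)
  rw [integral_indicator_one (hset θ₀), integral_indicator_one (hset θ₀)] at hmain
  have h1 : u ^ 3 / 2 * Real.exp (l / 2) = u / 2 := by
    calc _ = u / 2 * (Real.exp (l / 2) * u ^ 2) := by ring
      _ = _ := by rw [hexp, mul_one]
  have h2 : 1 / (2 * u ^ 3) * (gauss θ₁.1).real A ≤ u / 2 := by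
    calc _ ≤ 1 / (2 * u ^ 3) * u ^ 4 := by
          rw [hu4]; exact mul_le_mul_of_nonneg_left hPA1 (by positivity)
      _ = u / 2 := by field_simp
  have h3 : 3 / 4 ≤ u := by linarith
  have h4 : (3 / 4 : ℝ) ^ 4 ≤ u ^ 4 := pow_le_pow_left₀ (by norm_num) h3 4
  rw [hu4] at h4
  norm_num at h4
  linarith

/-! ### Assouad lower bound -/

/-- The block of length `k ^ 2` containing the index `i`. -/
def block {n k : ℕ} (hk : 0 < k) (hn : n ≤ k ^ 3) (i : Fin n) : Fin k :=
  ⟨i / k ^ 2, (Nat.div_lt_iff_lt_mul (by positivity)).2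
    (lt_of_lt_of_le i.2 (hn.trans_eq (by ring)))⟩

/-- The staircase with steps of length `k ^ 2` and height `1 / k`, in which the `j`-th step is
raised by `1 / (2 * k)` if `τ j` holds. -/
noncomputable def stairs {n k : ℕ} (hk : 0 < k) (hn : n ≤ k ^ 3) (τ : Fin k → Bool) : Iso n :=
  ⟨fun i => (2 * (block hk hn i : ℕ) + (if τ (block hk hn i) then 1 else 0)) / (2 * k), by
    have hkR : (0 : ℝ) < k := by exact_mod_cast hk
    refine ⟨fun i => ⟨by dsimp only; split_ifs <;> positivity, ?_⟩, fun i j hij => ?_⟩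
    · rw [div_le_one (by positivity)]
      have h1 : ((block hk hn i : ℕ) : ℝ) + 1 ≤ k := by exact_mod_cast (block hk hn i).2
      split_ifs <;> linarith
    · refine div_le_div_of_nonneg_right ?_ (by positivity)
      have hle : block hk hn i ≤ block hk hn j := Nat.div_le_div_right (c := k ^ 2) hij
      rcases hle.eq_or_lt with he | hlt
      · rw [he]
      · have h1 : ((block hk hn i : ℕ) : ℝ) + 1 ≤ (block hk hn j : ℕ) := by exact_mod_cast hlt
        split_ifs <;> linarith⟩

/-- Flip of the `j`-th bit. -/
def flip {k : ℕ} (j : Fin k) (τ : Fin k → Bool) : Fin k → Bool := Function.update τ j (!τ j)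

lemma flip_involutive {k : ℕ} (j : Fin k) : Function.Involutive (flip j) := by
  intro τ
  ext i
  by_cases h : i = j
  · subst h; simp [flip]
  · simp [flip, h]

lemma stairs_flip {n k : ℕ} (hk : 0 < k) (hn : n ≤ k ^ 3) (τ : Fin k → Bool) (j : Fin k)
    (i : Fin n) : ((stairs hk hn τ).1 i - (stairs hk hn (flip j τ)).1 i) ^ 2 =
      if block hk hn i = j then 1 / (4 * (k : ℝ) ^ 2) else 0 := by
  have hkR : (0 : ℝ) < k := by exact_mod_cast hk
  by_cases h : block hk hn i = j
  · simp only [stairs, flip, h, Function.update_self, if_true]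
    cases τ j <;> · simp; field_simp; ring
  · simp [stairs, flip, h]

lemma sum_stairs_flip {n k : ℕ} (hk : 0 < k) (hn : n ≤ k ^ 3) (τ : Fin k → Bool) (j : Fin k) :
    ∑ i, ((stairs hk hn τ).1 i - (stairs hk hn (flip j τ)).1 i) ^ 2 ≤ 1 / 4 := by
  have hkR : (0 : ℝ) < k := by exact_mod_cast hk
  simp_rw [stairs_flip]
  rw [← Finset.sum_filter, Finset.sum_const, nsmul_eq_mul]
  have hcard : (Finset.univ.filter fun i : Fin n => block hk hn i = j).card ≤ k ^ 2 := by
    have hmap : ∀ i ∈ Finset.univ.filter (fun i : Fin n => block hk hn i = j),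
        (i : ℕ) % k ^ 2 ∈ Finset.range (k ^ 2) := fun i _ =>
      Finset.mem_range.2 (Nat.mod_lt _ (by positivity))
    refine (Finset.card_le_card_of_injOn (fun i : Fin n => (i : ℕ) % k ^ 2) hmap ?_).trans
      (Finset.card_range _).le
    intro a ha b hb hab
    have h1 : block hk hn a = block hk hn b := by
      simp only [Finset.coe_filter, Finset.mem_univ, true_and, Set.mem_ofPred_eq] at ha hb
      rw [ha, hb]
    have h2 : (a : ℕ) / k ^ 2 = b / k ^ 2 := congrArg Fin.val h1
    have h3 : (a : ℕ) % k ^ 2 = b % k ^ 2 := hab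
    ext
    rw [← Nat.div_add_mod (a : ℕ) (k ^ 2), ← Nat.div_add_mod (b : ℕ) (k ^ 2), h2, h3]
  have hcardR : ((Finset.univ.filter fun i : Fin n => block hk hn i = j).card : ℝ) ≤ k ^ 2 := by
    exact_mod_cast hcard
  calc _ ≤ (k : ℝ) ^ 2 * (1 / (4 * (k : ℝ) ^ 2)) :=
        mul_le_mul_of_nonneg_right hcardR (by positivity)
    _ = 1 / 4 := by field_simp

lemma exp_quarter_le : Real.exp (1 / 4) ≤ 3 / 2 := by
  have h1 : Real.exp (1 / 4) ^ 4 = Real.exp 1 := by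
    rw [← Real.exp_nat_mul]; norm_num
  have h2 := Real.exp_one_lt_d9
  by_contra! hcon
  have h3 : (3 / 2 : ℝ) ^ 4 ≤ Real.exp (1 / 4) ^ 4 := pow_le_pow_left₀ (by norm_num) hcon.le 4
  rw [h1] at h3
  norm_num at h3
  linarith

/-- Error in the `i`-th coordinate at `τ`, truncated at one and in units of a quarter of the
squared size `1 / (4 * k ^ 2)` of the perturbation. -/
noncomputable def coordErr {n k : ℕ} (hk : 0 < k) (hn : n ≤ k ^ 3) (T : (Fin n → ℝ) → Iso n)
    (i : Fin n) (τ : Fin k → Bool) (x : Fin n → ℝ) : ℝ :=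
  min (((T x).1 i - (stairs hk hn τ).1 i) ^ 2 * (16 * (k : ℝ) ^ 2)) 1

section Assouad

variable {n k : ℕ} (hk : 0 < k) (hn : n ≤ k ^ 3) {T : (Fin n → ℝ) → Iso n}

lemma measurable_coordErr (hT : Measurable T) (i : Fin n) (τ : Fin k → Bool) :
    Measurable (coordErr hk hn T i τ) := by
  have hTi : Measurable fun x => (T x).1 i :=
    (measurable_pi_apply i).comp (measurable_subtype_coe.comp hT)
  unfold coordErr
  fun_prop

lemma coordErr_nonneg (i : Fin n) (τ : Fin k → Bool) (x : Fin n → ℝ) :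
    0 ≤ coordErr hk hn T i τ x := by unfold coordErr; positivity

lemma coordErr_le_one (i : Fin n) (τ : Fin k → Bool) (x : Fin n → ℝ) :
    coordErr hk hn T i τ x ≤ 1 := min_le_right _ _

lemma integrable_coordErr (hT : Measurable T) (i : Fin n) (τ : Fin k → Bool)
    (μ : Measure (Fin n → ℝ)) [IsFiniteMeasure μ] : Integrable (coordErr hk hn T i τ) μ :=
  Integrable.of_bound (measurable_coordErr hk hn hT i τ).aestronglyMeasurable 1
    (.of_forall fun x => by
      rw [Real.norm_eq_abs, abs_of_nonneg (coordErr_nonneg hk hn i τ x)]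
      exact coordErr_le_one hk hn i τ x)

/-- No estimate of the `i`-th coordinate is accurate both at `τ` and after the flip of the bit
of the block of `i`. -/
lemma one_le_coordErr_add (i : Fin n) (τ : Fin k → Bool) (x : Fin n → ℝ) :
    1 ≤ coordErr hk hn T i τ x + coordErr hk hn T i (flip (block hk hn i) τ) x := by
  have hkR : (0 : ℝ) < k := by exact_mod_cast hk
  have hd := stairs_flip hk hn τ (block hk hn i) i
  rw [if_pos rfl] at hd
  have h0 := coordErr_nonneg hk hn (T := T) i τ x
  have h0' := coordErr_nonneg hk hn (T := T) i (flip (block hk hn i) τ) x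
  unfold coordErr at *
  set a := (stairs hk hn τ).1 i
  set b := (stairs hk hn (flip (block hk hn i) τ)).1 i
  set y := (T x).1 i
  by_contra! hcon
  have h1 : (y - a) ^ 2 * (16 * (k : ℝ) ^ 2) < 1 := by
    by_contra! h
    rw [min_eq_right h] at hcon
    linarith
  have h2 : (y - b) ^ 2 * (16 * (k : ℝ) ^ 2) < 1 := by
    by_contra! h
    rw [min_eq_right h] at hcon
    linarith
  have h3 : (a - b) ^ 2 * (16 * (k : ℝ) ^ 2) = 4 := by rw [hd]; field_simp; norm_num
  have h4 : (a - b) ^ 2 ≤ 2 * (y - a) ^ 2 + 2 * (y - b) ^ 2 := by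
    nlinarith [sq_nonneg ((y - a) + (y - b))]
  have h5 := mul_le_mul_of_nonneg_right h4 (show 0 ≤ 16 * (k : ℝ) ^ 2 by positivity)
  linarith

lemma coordErr_pair (hT : Measurable T) (i : Fin n) (τ : Fin k → Bool) :
    5 / 8 ≤ ∫ x, coordErr hk hn T i τ x ∂gauss (stairs hk hn τ).1 +
      ∫ x, coordErr hk hn T i (flip (block hk hn i) τ) x
        ∂gauss (stairs hk hn (flip (block hk hn i) τ)).1 := by
  set τ' := flip (block hk hn i) τ
  have h1 : 1 ≤ ∫ x, coordErr hk hn T i τ x ∂gauss (stairs hk hn τ).1 +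
      ∫ x, coordErr hk hn T i τ' x ∂gauss (stairs hk hn τ).1 := by
    rw [← integral_add (integrable_coordErr hk hn hT i τ _) (integrable_coordErr hk hn hT i τ' _)]
    calc (1 : ℝ) = ∫ _x, 1 ∂gauss (stairs hk hn τ).1 := by simp
      _ ≤ _ := integral_mono (integrable_const _)
        ((integrable_coordErr hk hn hT i τ _).add (integrable_coordErr hk hn hT i τ' _))
        fun x => one_le_coordErr_add hk hn i τ x
  have h2 := integral_gauss_le (stairs hk hn τ).1 (stairs hk hn τ').1
    (measurable_coordErr hk hn hT i τ') (coordErr_nonneg hk hn i τ')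
    (coordErr_le_one hk hn i τ') (t := 1 / 2) (by norm_num) (sum_stairs_flip hk hn τ _)
  have h3 := exp_quarter_le
  norm_num at h2 h3
  linarith

/-- Assouad's argument: on average over `τ`, the truncated error of each coordinate has
expectation at least `5 / 16`. -/
lemma sum_coordErr (hT : Measurable T) (i : Fin n) :
    5 / 16 * (2 : ℝ) ^ k ≤ ∑ τ, ∫ x, coordErr hk hn T i τ x ∂gauss (stairs hk hn τ).1 := by
  set F : (Fin k → Bool) → ℝ := fun τ => ∫ x, coordErr hk hn T i τ x ∂gauss (stairs hk hn τ).1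
  have h1 : ∑ τ, F (flip (block hk hn i) τ) = ∑ τ, F τ :=
    Equiv.sum_comp (flip_involutive (block hk hn i)).toPerm F
  have h2 : ∑ _τ : Fin k → Bool, (5 / 8 : ℝ) ≤ ∑ τ, (F τ + F (flip (block hk hn i) τ)) :=
    Finset.sum_le_sum fun τ _ => coordErr_pair hk hn hT i τ
  rw [Finset.sum_add_distrib, h1, Finset.sum_const, nsmul_eq_mul] at h2
  simp only [Finset.card_univ, Fintype.card_fun, Fintype.card_bool, Fintype.card_fin] at h2
  push_cast at h2
  linarith

end Assouad

/-- The lower bound for the nonparametric rate, from the staircases. -/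
lemma lower_bound_stairs {n k : ℕ} (hk : 0 < k) (hn : n ≤ k ^ 3) (hn0 : 0 < n) {δ : ℝ}
    (hδ' : δ ≤ 1 / 4) :
    ENNReal.ofReal (1 / (512 * (k : ℝ) ^ 2)) ≤
      minimaxQuantile (fun θ : Iso n => {gauss θ.1})
        (fun θ₁ θ₂ => (∑ i, (θ₁.1 i - θ₂.1 i) ^ 2) / n) δ := by
  have hkR : (0 : ℝ) < k := by exact_mod_cast hk
  have hnR : (0 : ℝ) < n := by exact_mod_cast hn0
  refine le_minimaxQuantile (μ := fun θ : Iso n => gauss θ.1) fun T hT hcon => ?_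
  have hτ : ∀ τ : Fin k → Bool,
      ∑ i, ∫ x, coordErr hk hn T i τ x ∂gauss (stairs hk hn τ).1 ≤ 9 / 32 * n := by
    intro τ
    set μ := gauss (stairs hk hn τ).1
    set G : Set (Fin n → ℝ) :=
      {x | (∑ i, ((T x).1 i - (stairs hk hn τ).1 i) ^ 2) / n < 1 / (512 * (k : ℝ) ^ 2)} with hG
    have hGm : MeasurableSet G :=
      measurableSet_lt ((measurable_loss hT (stairs hk hn τ).1).div_const _) measurable_const
    have hPG : 1 - δ ≤ μ.real G :=
      (ENNReal.ofReal_le_iff_le_toReal (measure_ne_top _ _)).1 (hcon (stairs hk hn τ))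
    have hpt : ∀ x, ∑ i, coordErr hk hn T i τ x ≤ n / 32 + n * Gᶜ.indicator 1 x := by
      intro x
      by_cases hx : x ∈ G
      · have h1 : ∑ i, coordErr hk hn T i τ x ≤
            (∑ i, ((T x).1 i - (stairs hk hn τ).1 i) ^ 2) * (16 * (k : ℝ) ^ 2) := by
          rw [Finset.sum_mul]
          exact Finset.sum_le_sum fun i _ => min_le_left _ _
        have h2 : (∑ i, ((T x).1 i - (stairs hk hn τ).1 i) ^ 2) / n < 1 / (512 * (k : ℝ) ^ 2) := hx
        rw [div_lt_iff₀ hnR] at h2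
        have h3 := mul_le_mul_of_nonneg_right h2.le (show 0 ≤ 16 * (k : ℝ) ^ 2 by positivity)
        have h4 : 1 / (512 * (k : ℝ) ^ 2) * n * (16 * (k : ℝ) ^ 2) = n / 32 := by
          field_simp; norm_num
        simp only [Set.indicator_of_notMem (show x ∉ Gᶜ from fun h => h hx), mul_zero, add_zero]
        linarith
      · have h1 : ∑ i, coordErr hk hn T i τ x ≤ ∑ _i : Fin n, (1 : ℝ) :=
          Finset.sum_le_sum fun i _ => coordErr_le_one hk hn i τ x
        simp only [Finset.sum_const, Finset.card_univ, Fintype.card_fin, nsmul_eq_mul,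
          mul_one] at h1
        rw [Set.indicator_of_mem (show x ∈ Gᶜ from hx)]
        simp only [Pi.one_apply, mul_one]
        linarith
    have hind : Integrable (Gᶜ.indicator (1 : (Fin n → ℝ) → ℝ)) μ :=
      (integrable_const (1 : ℝ)).indicator hGm.compl
    rw [← integral_finsetSum _ fun i _ => integrable_coordErr hk hn hT i τ _]
    calc _ ≤ ∫ x, ((n : ℝ) / 32 + n * Gᶜ.indicator 1 x) ∂μ :=
          integral_mono (integrable_finsetSum _ fun i _ => integrable_coordErr hk hn hT i τ _)
            ((integrable_const _).add (hind.const_mul _)) hpt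
      _ = n / 32 + n * μ.real Gᶜ := by
          rw [integral_add (integrable_const _) (hind.const_mul _), integral_const_mul,
            integral_indicator_one hGm.compl]
          simp
      _ ≤ _ := by
          rw [probReal_compl_eq_one_sub hGm]
          have h5 : 1 - μ.real G ≤ 1 / 4 := by linarith
          have := mul_le_mul_of_nonneg_left h5 hnR.le
          linarith
  have hsum : ∑ _i : Fin n, 5 / 16 * (2 : ℝ) ^ k ≤
      ∑ i, ∑ τ, ∫ x, coordErr hk hn T i τ x ∂gauss (stairs hk hn τ).1 :=
    Finset.sum_le_sum fun i _ => sum_coordErr hk hn hT i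
  rw [Finset.sum_comm] at hsum
  have hsum2 := hsum.trans (Finset.sum_le_sum fun τ _ => hτ τ)
  simp only [Finset.sum_const, Finset.card_univ, Fintype.card_fun, Fintype.card_bool,
    Fintype.card_fin, nsmul_eq_mul] at hsum2
  push_cast at hsum2
  have : 0 < (n : ℝ) * 2 ^ k := by positivity
  nlinarith

/-! ### Conclusion -/

/-- The number `k` of blocks: `n ≤ k ^ 3`, and `k` is of order `n ^ (1 / 3)`. -/
lemma exists_scale {n : ℕ} (hn : 0 < n) :
    ∃ k : ℕ, 0 < k ∧ n ≤ k ^ 3 ∧ (k : ℝ) ≤ 2 * (n : ℝ) ^ (1 / 3 : ℝ) := by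
  have hn1 : (1 : ℝ) ≤ n := by exact_mod_cast hn
  have hr : (1 : ℝ) ≤ (n : ℝ) ^ (1 / 3 : ℝ) := Real.one_le_rpow hn1 (by norm_num)
  refine ⟨⌈(n : ℝ) ^ (1 / 3 : ℝ)⌉₊, Nat.ceil_pos.2 (by linarith), ?_, ?_⟩
  · have h1 : ((n : ℝ) ^ (1 / 3 : ℝ)) ^ 3 = n := by
      rw [← Real.rpow_natCast, ← Real.rpow_mul (by linarith)]; norm_num
    have h2 : ((n : ℝ) ^ (1 / 3 : ℝ)) ^ 3 ≤ (⌈(n : ℝ) ^ (1 / 3 : ℝ)⌉₊ : ℝ) ^ 3 :=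
      pow_le_pow_left₀ (by linarith) (Nat.le_ceil _) 3
    rw [h1] at h2
    exact_mod_cast h2
  · have := Nat.ceil_lt_add_one (show 0 ≤ (n : ℝ) ^ (1 / 3 : ℝ) by linarith)
    linarith

end Isotonic

open Isotonic in
/-- isotonic regression. -/
theorem isotonic_regression :
    ∃ c C : ℝ, 0 < c ∧ 0 < C ∧
      ∀ n : ℕ, 2 ≤ n → ∀ δ : ℝ, 0 < δ → δ ≤ 1/4 →
        ENNReal.ofReal (c * min ((n : ℝ) ^ (-(2:ℝ)/3) + Real.log (1/δ) / n) 1) ≤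
            minimaxQuantile
              (fun θ : {θ : Fin n → ℝ // (∀ i, 0 ≤ θ i ∧ θ i ≤ 1) ∧ Monotone θ} =>
                {Measure.pi fun i : Fin n => gaussianReal (θ.1 i) 1})
              (fun θ₁ θ₂ => (∑ i, (θ₁.1 i - θ₂.1 i) ^ 2) / n) δ ∧
          minimaxQuantile
              (fun θ : {θ : Fin n → ℝ // (∀ i, 0 ≤ θ i ∧ θ i ≤ 1) ∧ Monotone θ} =>
                {Measure.pi fun i : Fin n => gaussianReal (θ.1 i) 1})
              (fun θ₁ θ₂ => (∑ i, (θ₁.1 i - θ₂.1 i) ^ 2) / n) δ ≤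
            ENNReal.ofReal (C * min ((n : ℝ) ^ (-(2:ℝ)/3) + Real.log (1/δ) / n) 1) := by
  refine ⟨1 / 4096, 264, by norm_num, by norm_num, fun n hn δ hδ hδ' => ?_⟩
  have hn0 : 0 < n := by omega
  have hnR : (0 : ℝ) < n := by exact_mod_cast hn0
  obtain ⟨k, hk, hnk, hkn⟩ := exists_scale hn0
  have hkR : (0 : ℝ) < k := by exact_mod_cast hk
  set A : ℝ := (n : ℝ) ^ (-(2:ℝ)/3) with hA
  have hA0 : 0 < A := Real.rpow_pos_of_pos hnR _
  have hl0 : 0 ≤ Real.log (1 / δ) := Real.log_nonneg (by rw [le_div_iff₀ hδ]; linarith)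
  set B : ℝ := Real.log (1 / δ) / n with hB
  have hB0 : 0 ≤ B := div_nonneg hl0 hnR.le
  have hkA : (k : ℝ) / n ≤ 2 * A := by
    rw [div_le_iff₀ hnR, hA, mul_assoc, ← Real.rpow_add_one hnR.ne']
    have h1 : -(2 : ℝ) / 3 + 1 = 1 / 3 := by norm_num
    rw [h1]
    exact hkn
  have hkA2 : A ≤ 4 / (k : ℝ) ^ 2 := by
    rw [le_div_iff₀ (by positivity)]
    have h1 : (k : ℝ) ^ 2 ≤ (2 * (n : ℝ) ^ (1 / 3 : ℝ)) ^ 2 := pow_le_pow_left₀ hkR.le hkn 2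
    have h2 : A * (2 * (n : ℝ) ^ (1 / 3 : ℝ)) ^ 2 = 4 := by
      rw [hA, mul_pow, ← Real.rpow_natCast ((n : ℝ) ^ (1 / 3 : ℝ)), ← Real.rpow_mul hnR.le,
        mul_left_comm, ← Real.rpow_add hnR]
      norm_num
    exact (mul_le_mul_of_nonneg_left h1 hA0.le).trans h2.le
  constructor
  · rcases le_total A (min B 1) with hAB | hAB
    · refine le_trans (ENNReal.ofReal_le_ofReal ?_) (lower_bound_two_point hn0 hδ hδ')
      have h1 : Real.log (1 / δ) / (2 * n) = B / 2 := by rw [hB]; field_simp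
      rw [h1]
      have h2 : min B 1 / 2 ≤ min (B / 2) 1 := by
        refine le_min ?_ ?_
        · linarith [min_le_left B 1]
        · linarith [min_le_right B 1]
      have h3 : min (A + B) 1 ≤ 2 * min B 1 := by
        rcases le_total B 1 with h | h
        · rw [min_eq_left h] at hAB ⊢
          linarith [min_le_left (A + B) 1]
        · rw [min_eq_right h]
          linarith [min_le_right (A + B) 1]
      have h4 : 0 ≤ min B 1 := by positivity
      linarith
    · refine le_trans (ENNReal.ofReal_le_ofReal ?_) (lower_bound_stairs hk hnk hn0 hδ')
      have h1 : (1 : ℝ) / (512 * (k : ℝ) ^ 2) = 4 / (k : ℝ) ^ 2 / 2048 := by field_simp; norm_num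
      have h3 : min (A + B) 1 ≤ 2 * A := by
        rcases le_total B 1 with h | h
        · rw [min_eq_left h] at hAB
          linarith [min_le_left (A + B) 1]
        · rw [min_eq_right h] at hAB
          linarith [min_le_right (A + B) 1]
      rw [h1]
      linarith
  · refine (upper_bound hk hnk hn0 hδ).trans (ENNReal.ofReal_le_ofReal ?_)
    have h1 : (132 * k + 16 * Real.log (1 / δ)) / n = 132 * ((k : ℝ) / n) + 16 * B := by
      rw [hB]; ring
    rw [h1, mul_min_of_nonneg _ _ (by norm_num)]
    exact min_le_min (by linarith) (by norm_num)
end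

section
/- High-probability bound for kernel density estimation with a δ-dependent bandwidth: let β, γ > 0, let ℓ := ⌈β⌉, and let K : ℝ → ℝ be a kernel of order ℓ with ‖K‖_∞ < ∞ and μ_β(K) := ∫|u|^β|K(u)|du < ∞. There exist constants c(β,K), C(β,K) > 0 depending only on β and K, and a choice of bandwidth h = h_{n,β,γ,K,δ} > 0, such that for every f ∈ F(β,γ), every x₀ ∈ ℝ, every n ∈ ℕ and every δ ∈ [2·exp(−c(β,K)·n), 1], if X₁,…,X_n are i.i.d. with density f, then with probability at least 1−δ, (f̂_n(x₀) − f(x₀))² ≤ C(β,K)·γ^{2/(β+1)}·(log(2/δ)/n)^{2β/(2β+1)}, where f̂_n is the kernel density estimator with bandwidth h and kernel K. -/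
/-!
Put `ε = log (2/δ) / n`, `g = γ ^ (1/(β+1))`, `η = ε ^ (1/(2β+1))`, and take the bandwidth
`h = η / g`. Taking `c = 1` forces `ε ≤ 1`, hence `η ≤ 1`. The square root of the claimed rate is
a constant times `g * η ^ β`.

*Bias* (`bias_bound`). Taylor expansion with Hölder remainder (`taylor_holder_remainder`) and the
moment conditions on `K` bound the bias by `γ h ^ β μ_β(K)`, which equals `μ_β(K) * g * η ^ β`
since `γ = g ^ (β+1)`.

*Sup norm* (`sup_bound`). Since `∫ f = 1`, smoothing `f` at scale `1/g` gives a value at most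
`‖K‖_∞ g`, so the bias bound at that scale yields `f ≤ g (‖K‖_∞ + μ_β(K))` everywhere.

*Fluctuation* (`chernoff_pi`). The variable `K ((X - x₀) / h)` is bounded by `B` and has second
moment at most `h g (B + μ_β(K)) B ‖K‖₁ = η A`. Chernoff's method together with
`exp s ≤ 1 + s + s ^ 2` for `|s| ≤ 1`, at the parameter `η ^ β / B`, shows that each one-sided
deviation of the mean exceeds `(B + A / B) η ^ (β+1)` with probability at most `δ / 2`; division
by `h` turns this into `(B + A / B) g η ^ β`.
-/

open MeasureTheory ENNReal

/-- The Hölder class `F(β,γ)` of densities. -/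
def holderClass (β γ : ℝ) : Set (ℝ → ℝ) :=
  {f | (∀ x, 0 ≤ f x) ∧ Measurable f ∧ (∫ x, f x) = 1 ∧
    (∀ k < ⌈β⌉₊ - 1, Differentiable ℝ (iteratedDeriv k f)) ∧
    ∀ x y : ℝ, |iteratedDeriv (⌈β⌉₊ - 1) f x - iteratedDeriv (⌈β⌉₊ - 1) f y| ≤
      γ * |x - y| ^ (β - (⌈β⌉₊ - 1 : ℕ))}

/-- Taylor's formula with Hölder remainder, by induction on the order: the remainder of `f` vanishes
at `0` and its derivative is the remainder of `deriv f`, so the mean value inequality applies. The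
factor `1 / m!` is not needed and is dropped. -/
lemma taylor_holder_remainder (m : ℕ) : ∀ (f : ℝ → ℝ) (a γ x₀ : ℝ), 0 ≤ a → 0 ≤ γ →
    (∀ k < m, Differentiable ℝ (iteratedDeriv k f)) →
    (∀ y, |iteratedDeriv m f y - iteratedDeriv m f x₀| ≤ γ * |y - x₀| ^ a) →
    ∀ t, |f (x₀ + t) - ∑ j ∈ Finset.range (m + 1), iteratedDeriv j f x₀ / j.factorial * t ^ j|
      ≤ γ * |t| ^ (a + m) := by
  induction m with
  | zero =>
    intro f a γ x₀ ha hγ _ h t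
    simpa using h (x₀ + t)
  | succ m ih =>
    intro f a γ x₀ ha hγ hd h t
    have ih' := ih (deriv f) a γ x₀ ha hγ
      (fun k hk => by
        have := hd (k + 1) (by omega)
        rwa [iteratedDeriv_succ'] at this)
      (fun y => by
        have := h y
        rwa [iteratedDeriv_succ'] at this)
    have hf : Differentiable ℝ f := by simpa using hd 0 (by omega)
    -- the derivative of the remainder of `f` is the remainder of `deriv f`
    have hder : ∀ s : ℝ, HasDerivAt
        (fun s => f (x₀ + s) -
          ∑ j ∈ Finset.range (m + 1 + 1), iteratedDeriv j f x₀ / j.factorial * s ^ j)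
        (deriv f (x₀ + s) -
          ∑ j ∈ Finset.range (m + 1), iteratedDeriv j (deriv f) x₀ / j.factorial * s ^ j) s := by
      intro s
      have h1 : HasDerivAt (fun s => f (x₀ + s)) (deriv f (x₀ + s)) s :=
        (hf (x₀ + s)).hasDerivAt.comp_const_add x₀ s
      refine h1.sub ?_
      simp_rw [Finset.sum_range_succ' _ (m + 1)]
      have h2 : HasDerivAt (fun s : ℝ => ∑ j ∈ Finset.range (m + 1),
          iteratedDeriv (j + 1) f x₀ / (j + 1).factorial * s ^ (j + 1))
          (∑ j ∈ Finset.range (m + 1), iteratedDeriv j (deriv f) x₀ / j.factorial * s ^ j) s := by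
        refine HasDerivAt.fun_sum fun j _ => ?_
        have := (hasDerivAt_pow (j + 1) s).const_mul
          (iteratedDeriv (j + 1) f x₀ / (j + 1).factorial)
        convert! this using 1
        rw [iteratedDeriv_succ', Nat.factorial_succ]
        push_cast
        have : (j : ℝ) + 1 ≠ 0 := by positivity
        have : (j.factorial : ℝ) ≠ 0 := by positivity
        field_simp
      simpa using h2.add_const (iteratedDeriv 0 f x₀ / (Nat.factorial 0) * 1)
    have key := (convex_uIcc (0 : ℝ) t).norm_image_sub_le_of_norm_hasDerivWithin_le
      (C := γ * |t| ^ (a + m)) (fun s _ => (hder s).hasDerivWithinAt)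
      (fun s hs => by
        refine (ih' s).trans ?_
        have : |s| ≤ |t| := by simpa using Set.abs_sub_left_of_mem_uIcc hs
        gcongr) Set.left_mem_uIcc Set.right_mem_uIcc
    have h0 : ∑ j ∈ Finset.range (m + 1 + 1),
        iteratedDeriv j f x₀ / j.factorial * (0 : ℝ) ^ j = f x₀ := by
      rw [Finset.sum_range_succ']
      simp
    simp only [h0, add_zero, sub_self, sub_zero, Real.norm_eq_abs] at key
    refine key.trans (le_of_eq ?_)
    rcases eq_or_ne t 0 with rfl | ht
    · have : a + ((m + 1 : ℕ) : ℝ) ≠ 0 := by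
        have : (0 : ℝ) < (m + 1 : ℕ) := by positivity
        linarith
      rw [abs_zero, Real.zero_rpow this]
      simp
    · push_cast
      rw [← add_assoc, Real.rpow_add_one (abs_ne_zero.2 ht)]; ring

/-- One-sided Bernstein-type bound for i.i.d. bounded variables. It uses the uncentred second moment
`v`: since `exp s ≤ 1 + s + s ^ 2` for `|s| ≤ 1`, the moment generating function of `Y` at `l` is at
most `exp (l * E Y + l ^ 2 * v)`. -/
lemma chernoff_pi (ν : Measure ℝ) [IsProbabilityMeasure ν] {Y : ℝ → ℝ} (hY : Measurable Y)
    {B v l : ℝ} (hB : ∀ x, |Y x| ≤ B) (hv : ∫ x, Y x ^ 2 ∂ν ≤ v) (hl : 0 ≤ l) (hlB : l * B ≤ 1)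
    (n : ℕ) (t : ℝ) :
    (Measure.pi fun _ : Fin n => ν).real {x | t ≤ ∑ i, Y (x i) - n * ∫ x, Y x ∂ν} ≤
      Real.exp (-l * t + n * (l ^ 2 * v)) := by
  have hYi : Integrable Y ν :=
    Integrable.of_bound hY.aestronglyMeasurable B (.of_forall hB)
  have hY2 : Integrable (fun x => Y x ^ 2) ν :=
    Integrable.of_bound (hY.pow_const 2).aestronglyMeasurable (B ^ 2) (.of_forall fun x => by
      rw [Real.norm_eq_abs, abs_pow]
      gcongr
      exact hB x)
  have hlY : ∀ x, |l * Y x| ≤ 1 := fun x => by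
    rw [abs_mul, abs_of_nonneg hl]
    exact (mul_le_mul_of_nonneg_left (hB x) hl).trans hlB
  have hei : Integrable (fun x => Real.exp (l * Y x)) ν :=
    Integrable.of_bound (by fun_prop) (Real.exp 1) (.of_forall fun x => by
      rw [Real.norm_eq_abs, Real.abs_exp]
      exact Real.exp_le_exp.2 (abs_le.1 (hlY x)).2)
  have hmgf1 : ∫ x, Real.exp (l * Y x) ∂ν ≤ Real.exp (l * ∫ x, Y x ∂ν + l ^ 2 * v) := by
    calc ∫ x, Real.exp (l * Y x) ∂ν ≤ ∫ x, (1 + l * Y x + l ^ 2 * Y x ^ 2) ∂ν := by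
          refine integral_mono hei
            (((integrable_const _).add (hYi.const_mul l)).add (hY2.const_mul _)) fun x => ?_
          have := (abs_le.1 (Real.abs_exp_sub_one_sub_id_le (hlY x))).2
          simp only
          nlinarith
      _ = 1 + l * ∫ x, Y x ∂ν + l ^ 2 * ∫ x, Y x ^ 2 ∂ν := by
          have := hYi.const_mul l
          rw [integral_add (by fun_prop) (hY2.const_mul _),
            integral_add (integrable_const _) (hYi.const_mul l), integral_const_mul,
            integral_const_mul]
          simp
      _ ≤ l * ∫ x, Y x ∂ν + l ^ 2 * v + 1 := by
          have := mul_le_mul_of_nonneg_left hv (sq_nonneg l)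
          linarith
      _ ≤ _ := Real.add_one_le_exp _
  have hexp : ∀ x : Fin n → ℝ, Real.exp (l * (∑ i, Y (x i) - n * ∫ x, Y x ∂ν)) =
      Real.exp (-(n * (l * ∫ x, Y x ∂ν))) * ∏ i, Real.exp (l * Y (x i)) := fun x => by
    rw [← Real.exp_sum, ← Real.exp_add, ← Finset.mul_sum]
    ring_nf
  have hint : Integrable (fun x : Fin n → ℝ =>
      Real.exp (l * (∑ i, Y (x i) - n * ∫ x, Y x ∂ν))) (Measure.pi fun _ => ν) := by
    simp_rw [hexp]
    exact (Integrable.fintype_prod (f := fun _ x => Real.exp (l * Y x)) fun _ => hei).const_mul _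
  refine (ProbabilityTheory.measure_ge_le_exp_mul_mgf t hl hint).trans ?_
  rw [ProbabilityTheory.mgf]
  simp_rw [hexp]
  rw [integral_const_mul, integral_fintype_prod_eq_pow (fun x => Real.exp (l * Y x)),
    Fintype.card_fin]
  calc _ ≤ Real.exp (-l * t) * (Real.exp (-(n * (l * ∫ x, Y x ∂ν))) *
        Real.exp (l * ∫ x, Y x ∂ν + l ^ 2 * v) ^ n) := by gcongr
    _ = _ := by
      rw [← Real.exp_nat_mul, ← Real.exp_add, ← Real.exp_add]
      ring_nf


lemma integral_density_rescale {f : ℝ → ℝ} (hf0 : ∀ x, 0 ≤ f x) (hfm : Measurable f)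
    (G : ℝ → ℝ) (x₀ : ℝ) {h : ℝ} (hh : 0 < h) :
    ∫ x, G ((x - x₀) / h) ∂(volume.withDensity fun x => ENNReal.ofReal (f x)) =
      h * ∫ u, G u * f (x₀ + h * u) := by
  rw [integral_withDensity_eq_integral_toReal_smul (by fun_prop) (.of_forall fun _ => by simp)]
  simp_rw [ENNReal.toReal_ofReal (hf0 _), smul_eq_mul]
  have h1 := Measure.integral_comp_mul_left
    (fun y => f (x₀ + y) * G ((x₀ + y - x₀) / h)) h
  rw [integral_add_left_eq_self (fun x => f x * G ((x - x₀) / h)) x₀] at h1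
  rw [abs_of_pos (inv_pos.2 hh), smul_eq_mul] at h1
  have h2 : ∀ u, f (x₀ + h * u) * G ((x₀ + h * u - x₀) / h) = G u * f (x₀ + h * u) := fun u => by
    rw [add_sub_cancel_left, mul_div_cancel_left₀ _ hh.ne', mul_comm]
  simp_rw [h2] at h1
  rw [h1, mul_inv_cancel_left₀ hh.ne']

lemma integrable_affine_comp {f : ℝ → ℝ} (hf : Integrable f) (x₀ : ℝ) {h : ℝ} (hh : 0 < h) :
    Integrable fun u => f (x₀ + h * u) :=
  (hf.comp_add_left x₀).comp_mul_left' hh.ne'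

lemma integrable_of_mem_holderClass {β γ : ℝ} {f : ℝ → ℝ} (hf : f ∈ holderClass β γ) :
    Integrable f :=
  integrable_of_integral_eq_one hf.2.2.1

/-- The bias of the kernel estimator. The Taylor polynomial of `f` at `x₀` integrates against `K`
to `f x₀` by the moment conditions, so only the Hölder remainder contributes. -/
lemma bias_bound {β : ℝ} (hβ : 0 < β) {K : ℝ → ℝ} (hKmeas : Measurable K)
    (hKker : (∫ u, K u) = 1)
    (hKord : ∀ j : ℕ, 1 ≤ j → j ≤ ⌈β⌉₊ - 1 → (∫ u, u ^ j * K u) = 0)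
    {B : ℝ} (hB : ∀ u, |K u| ≤ B)
    (hKmom : Integrable fun u => |u| ^ β * |K u|)
    {γ : ℝ} (hγ : 0 < γ) {f : ℝ → ℝ} (hf : f ∈ holderClass β γ) (x₀ : ℝ) {h : ℝ} (hh : 0 < h) :
    |(∫ u, K u * f (x₀ + h * u)) - f x₀| ≤ γ * h ^ β * ∫ u, |u| ^ β * |K u| := by
  have hfi := integrable_of_mem_holderClass hf
  obtain ⟨hf0, hfm, hf1, hfd, hfh⟩ := hf
  have hKi : Integrable K := integrable_of_integral_eq_one hKker
  set m := ⌈β⌉₊ - 1 with hm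
  have hmβ : (m : ℝ) < β := Nat.lt_ceil.1 (by have := Nat.ceil_pos.2 hβ; omega)
  have hT := taylor_holder_remainder m f (β - m) γ x₀ (by linarith) hγ.le hfd (fun y => hfh y x₀)
  simp only [sub_add_cancel] at hT
  have hmomj : ∀ j ∈ Finset.range (m + 1), Integrable fun u => u ^ j * K u := by
    intro j hj
    have hjβ : (j : ℝ) ≤ β :=
      le_trans (by exact_mod_cast Nat.lt_succ_iff.1 (Finset.mem_range.1 hj)) hmβ.le
    refine (hKi.abs.add hKmom).mono' (by fun_prop) (.of_forall fun u => ?_)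
    -- `|u| ^ j ≤ 1 + |u| ^ β` for `j ≤ β`
    have : |u| ^ j ≤ 1 + |u| ^ β := by
      rcases le_total |u| 1 with hu | hu
      · have := pow_le_one₀ (n := j) (abs_nonneg u) hu
        have := Real.rpow_nonneg (abs_nonneg u) β
        linarith
      · have := Real.rpow_le_rpow_of_exponent_le hu hjβ
        rw [Real.rpow_natCast] at this
        linarith
    have := mul_le_mul_of_nonneg_right this (abs_nonneg (K u))
    simp only [Real.norm_eq_abs, abs_mul, abs_pow, Pi.add_apply]
    linarith
  set T : ℝ → ℝ := fun u => ∑ j ∈ Finset.range (m + 1),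
    iteratedDeriv j f x₀ / j.factorial * h ^ j * (u ^ j * K u) with hTdef
  have hTi : Integrable T := integrable_finsetSum _ fun j hj => (hmomj j hj).const_mul _
  have hTint : ∫ u, T u = f x₀ := by
    rw [hTdef, integral_finsetSum _ fun j hj => (hmomj j hj).const_mul _]
    simp_rw [integral_const_mul]
    rw [Finset.sum_range_succ', Finset.sum_eq_zero]
    · simp [hKker]
    · intro j hj
      rw [hKord (j + 1) (by omega) (by have := Finset.mem_range.1 hj; omega), mul_zero]
  have hKf : Integrable fun u => K u * f (x₀ + h * u) :=
    (integrable_affine_comp hfi x₀ hh).bdd_mul hKmeas.aestronglyMeasurable (.of_forall hB)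
  rw [← hTint, ← integral_sub hKf hTi, ← integral_const_mul, ← Real.norm_eq_abs]
  refine norm_integral_le_of_norm_le (hKmom.const_mul _) (.of_forall fun u => ?_)
  have h1 : K u * f (x₀ + h * u) - T u = K u * (f (x₀ + h * u) -
      ∑ j ∈ Finset.range (m + 1), iteratedDeriv j f x₀ / j.factorial * (h * u) ^ j) := by
    rw [hTdef, mul_sub, Finset.mul_sum]
    congr 1
    refine Finset.sum_congr rfl fun j _ => ?_
    rw [mul_pow]; ring
  rw [h1, Real.norm_eq_abs, abs_mul]
  have h2 := mul_le_mul_of_nonneg_left (hT (h * u)) (abs_nonneg (K u))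
  rw [abs_mul, abs_of_pos hh, Real.mul_rpow hh.le (abs_nonneg u)] at h2
  linarith

/-- With `γ = g ^ (β + 1)` and bandwidth `η / g`, the bias scale `γ * h ^ β` equals `g * η ^ β`. -/
lemma scale_identity {β g η : ℝ} (hg : 0 < g) (hη : 0 < η) :
    g ^ (β + 1) * (η / g) ^ β = g * η ^ β := by
  have := (Real.rpow_pos_of_pos hg β).ne'
  rw [Real.div_rpow hη.le hg.le, Real.rpow_add_one hg.ne']
  field_simp

/-- Uniform bound on densities in `F(β, g ^ (β + 1))`: compare `f x₀` with the average of `f`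
against `K` at scale `1 / g`, which is at most `B * g` because `∫ f = 1`. -/
lemma sup_bound {β : ℝ} (hβ : 0 < β) {K : ℝ → ℝ} (hKmeas : Measurable K)
    (hKker : (∫ u, K u) = 1)
    (hKord : ∀ j : ℕ, 1 ≤ j → j ≤ ⌈β⌉₊ - 1 → (∫ u, u ^ j * K u) = 0)
    {B : ℝ} (hB : ∀ u, |K u| ≤ B)
    (hKmom : Integrable fun u => |u| ^ β * |K u|)
    {g : ℝ} (hg : 0 < g) {f : ℝ → ℝ} (hf : f ∈ holderClass β (g ^ (β + 1))) (x₀ : ℝ) :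
    f x₀ ≤ g * (B + ∫ u, |u| ^ β * |K u|) := by
  have hfi := integrable_of_mem_holderClass hf
  have hh : 0 < 1 / g := by positivity
  have hb := bias_bound hβ hKmeas hKker hKord hB hKmom (by positivity) hf x₀ hh
  rw [scale_identity hg one_pos, Real.one_rpow, mul_one] at hb
  have hfi' := integrable_affine_comp hfi x₀ hh
  have h1 : ∫ u, K u * f (x₀ + 1 / g * u) ≤ B * g := by
    calc _ ≤ ∫ u, B * f (x₀ + 1 / g * u) := by
          refine integral_mono (hfi'.bdd_mul hKmeas.aestronglyMeasurable (.of_forall hB))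
            (hfi'.const_mul B) fun u => ?_
          exact mul_le_mul_of_nonneg_right (abs_le.1 (hB u)).2 (hf.1 _)
      _ = B * g := by
          rw [integral_const_mul, Measure.integral_comp_mul_left (fun y => f (x₀ + y)),
            integral_add_left_eq_self f x₀, hf.2.2.1]
          simp [abs_of_pos hg]
  have := (abs_le.1 hb).1
  linarith

/-- high-probability bound for kernel density estimation with a `δ`-dependent
bandwidth. -/
theorem kde_high_probability_bound
    (β : ℝ) (hβ : 0 < β) (K : ℝ → ℝ) (hKmeas : Measurable K)
    -- `K` is a kernel of order `ℓ = ⌈β⌉`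
    (hKker : (∫ u, K u) = 1)
    (hKord : ∀ j : ℕ, 1 ≤ j → j ≤ ⌈β⌉₊ - 1 → (∫ u, u ^ j * K u) = 0)
    -- `‖K‖_∞ < ∞`
    (hKbdd : ∃ B : ℝ, ∀ u, |K u| ≤ B)
    -- `μ_β(K) = ∫ |u|^β |K(u)| du < ∞`
    (hKmom : Integrable fun u => |u| ^ β * |K u|) :
    ∃ c C : ℝ, 0 < c ∧ 0 < C ∧
      ∀ γ : ℝ, 0 < γ →
        ∃ h : ℕ → ℝ → ℝ,
          ∀ n : ℕ, 0 < n → ∀ δ : ℝ, 2 * Real.exp (-(c * n)) ≤ δ → δ ≤ 1 →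
            0 < h n δ ∧
            ∀ f ∈ holderClass β γ, ∀ x₀ : ℝ,
              (Measure.pi fun _ : Fin n => volume.withDensity fun x => ENNReal.ofReal (f x))
                {x | C * γ ^ ((2:ℝ) / (β + 1)) *
                    (Real.log (2/δ) / n) ^ (2 * β / (2 * β + 1)) <
                  ((∑ i, K ((x i - x₀) / h n δ)) / (n * h n δ) - f x₀) ^ 2} ≤
                ENNReal.ofReal δ := by
  obtain ⟨B₀, hB₀⟩ := hKbdd
  obtain ⟨B, hBpos, hB⟩ : ∃ B : ℝ, 0 < B ∧ ∀ u, |K u| ≤ B :=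
    ⟨max B₀ 1, by positivity, fun u => (hB₀ u).trans (le_max_left _ _)⟩
  have hKi : Integrable K := integrable_of_integral_eq_one hKker
  set μ := ∫ u, |u| ^ β * |K u| with hμ
  have hμ0 : 0 ≤ μ := integral_nonneg fun u => by positivity
  set A := (B + μ) * (B * ∫ u, |K u|) with hA
  have hA0 : 0 ≤ A := by
    have : 0 ≤ ∫ u, |K u| := integral_nonneg fun u => by positivity
    positivity
  refine ⟨1, (μ + (B + A / B)) ^ 2, one_pos, by positivity, fun γ hγ => ?_⟩
  obtain ⟨g, hg, hgγ⟩ : ∃ g : ℝ, 0 < g ∧ g = γ ^ (1 / (β + 1)) := ⟨_, by positivity, rfl⟩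
  have hgγ' : g ^ (β + 1) = γ := by
    rw [hgγ, ← Real.rpow_mul hγ.le, one_div_mul_cancel (by positivity), Real.rpow_one]
  have hg2 : γ ^ ((2:ℝ) / (β + 1)) = g ^ 2 := by
    rw [hgγ, ← Real.rpow_natCast, ← Real.rpow_mul hγ.le]
    congr 1
    push_cast
    ring
  refine ⟨fun n δ => (Real.log (2 / δ) / n) ^ (1 / (2 * β + 1)) / g,
    fun n hn δ hδ hδ1 => ?_⟩
  have hn' : (0 : ℝ) < n := by exact_mod_cast hn
  have hδ0 : 0 < δ := lt_of_lt_of_le (by positivity) hδ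
  set L := Real.log (2 / δ) with hL
  have hL0 : 0 < L := Real.log_pos (by rw [lt_div_iff₀ hδ0]; linarith)
  have hLn : L ≤ n := by
    rw [hL, Real.log_le_iff_le_exp (by positivity), div_le_iff₀ hδ0]
    rw [one_mul, Real.exp_neg] at hδ
    have := mul_le_mul_of_nonneg_left hδ (Real.exp_pos n).le
    have h2 : Real.exp n * (2 * (Real.exp n)⁻¹) = 2 := by
      field_simp
    linarith
  obtain ⟨η, hη, hηdef⟩ : ∃ η : ℝ, 0 < η ∧ η = (L / n) ^ (1 / (2 * β + 1)) :=
    ⟨_, by positivity, rfl⟩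
  have hη1 : η ≤ 1 := by
    rw [hηdef]
    exact Real.rpow_le_one (by positivity) ((div_le_one hn').2 hLn) (by positivity)
  set p := η ^ β with hp
  have hp0 : 0 < p := by positivity
  have hp1 : p ≤ 1 := Real.rpow_le_one hη.le hη1 hβ.le
  have hrate : (L / n) ^ (2 * β / (2 * β + 1)) = p ^ 2 := by
    rw [hp, hηdef, ← Real.rpow_natCast, ← Real.rpow_mul (by positivity),
      ← Real.rpow_mul (by positivity)]
    congr 1
    push_cast
    ring
  have hLp : L = n * (p ^ 2 * η) := by
    have : p ^ 2 * η = L / n := by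
      rw [hp, ← Real.rpow_natCast, ← Real.rpow_mul hη.le, ← Real.rpow_add_one hη.ne', hηdef,
        ← Real.rpow_mul (by positivity)]
      convert Real.rpow_one (L / n) using 2
      push_cast
      field_simp
    rw [this]
    field_simp
  beta_reduce
  rw [← hL, ← hηdef]
  set h := η / g with hh
  have hh0 : 0 < h := by positivity
  refine ⟨hh0, fun f hf x₀ => ?_⟩
  obtain ⟨hf0, hfm, hf1, -⟩ := id hf
  have hfi := integrable_of_mem_holderClass hf
  set ν := volume.withDensity fun x => ENNReal.ofReal (f x) with hν
  have : IsProbabilityMeasure ν := ⟨by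
    rw [hν, withDensity_apply _ .univ, Measure.restrict_univ,
      ← ofReal_integral_eq_lintegral_ofReal hfi (.of_forall hf0), hf1, ENNReal.ofReal_one]⟩
  have hbias := bias_bound hβ hKmeas hKker hKord hB hKmom hγ hf x₀ hh0
  rw [← hgγ', hh, scale_identity hg hη, ← hh, ← hp, ← hμ] at hbias
  have hsup : ∀ x, f x ≤ g * (B + μ) :=
    sup_bound hβ hKmeas hKker hKord hB hKmom hg (by rwa [hgγ'])
  set E := ∫ x, K ((x - x₀) / h) ∂ν with hE
  have hE' : E = h * ∫ u, K u * f (x₀ + h * u) := integral_density_rescale hf0 hfm K x₀ hh0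
  have hV : ∫ x, K ((x - x₀) / h) ^ 2 ∂ν ≤ η * A := by
    rw [integral_density_rescale hf0 hfm (fun u => K u ^ 2) x₀ hh0]
    have hle : ∫ u, K u ^ 2 * f (x₀ + h * u) ≤ ∫ u, g * (B + μ) * B * |K u| := by
      refine integral_mono_of_nonneg (.of_forall fun u => mul_nonneg (sq_nonneg _) (hf0 _))
        (hKi.abs.const_mul _) (.of_forall fun u => ?_)
      simp only
      rw [← sq_abs]
      calc |K u| ^ 2 * f (x₀ + h * u) ≤ (B * |K u|) * (g * (B + μ)) := by
            refine mul_le_mul ?_ (hsup _) (hf0 _) (by positivity)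
            rw [sq]
            exact mul_le_mul_of_nonneg_right (hB u) (abs_nonneg _)
        _ = _ := by ring
    refine (mul_le_mul_of_nonneg_left hle hh0.le).trans (le_of_eq ?_)
    rw [integral_const_mul, hA, hh]
    field_simp
  have hYm : Measurable fun x => K ((x - x₀) / h) := by fun_prop
  set t := n * ((B + A / B) * (p * η)) with ht
  -- with `l = p / B` the Chernoff exponent equals `-L`
  have hexpo : Real.exp (-(p / B) * t + n * ((p / B) ^ 2 * (η * A))) = δ / 2 := by
    have : -(p / B) * t + n * ((p / B) ^ 2 * (η * A)) = -L := by
      rw [ht, hLp]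
      field_simp
      ring
    rw [this, Real.exp_neg, hL, Real.exp_log (by positivity), inv_div]
  have hlB : p / B * B ≤ 1 := by rwa [div_mul_cancel₀ _ hBpos.ne']
  have hup := chernoff_pi ν hYm (fun x => hB _) hV (by positivity) hlB n t
  have hlo := chernoff_pi ν hYm.neg (B := B) (v := η * A) (fun x => by simpa using hB _)
    (by simpa using hV) (l := p / B) (by positivity) hlB n t
  rw [hexpo] at hup hlo
  rw [← ofReal_measureReal]
  refine ENNReal.ofReal_le_ofReal ?_
  refine (measureReal_mono (s₂ := {x | t ≤ ∑ i, K ((x i - x₀) / h) - n * E} ∪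
    {x | t ≤ ∑ i, (-fun x => K ((x - x₀) / h)) (x i) -
      n * ∫ x, (-fun x => K ((x - x₀) / h)) x ∂ν}) ?_).trans
    ((measureReal_union_le _ _).trans (by linarith))
  intro x hx
  simp only [Set.mem_ofPred_eq, Set.mem_union, Pi.neg_apply, Finset.sum_neg_distrib,
    integral_neg] at hx ⊢
  rw [hg2, hrate, ← mul_pow, ← mul_pow, sq_lt_sq, abs_of_nonneg (by positivity)] at hx
  set S := ∑ i, K ((x i - x₀) / h) with hS
  by_contra! hcon
  have hdev : |S - n * E| < t := abs_lt.2 ⟨by linarith, by linarith⟩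
  have hdev' : |S / (n * h) - E / h| ≤ (B + A / B) * (g * p) := by
    have h1 : S / (n * h) - E / h = (S - n * E) / (n * h) := by field_simp
    rw [h1, abs_div, abs_of_pos (a := n * h) (by positivity), div_le_iff₀ (by positivity)]
    refine hdev.le.trans (le_of_eq ?_)
    rw [ht, hh]
    field_simp
  have hE'' : E / h = ∫ u, K u * f (x₀ + h * u) := by
    rw [hE', mul_div_cancel_left₀ _ hh0.ne']
  rw [← hE''] at hbias
  have := abs_sub_le (S / (n * h)) (E / h) (f x₀)
  linarith
end

section
/- δ-independent pointwise density estimator via Lepski's method: let β, γ > 0, let ℓ := ⌈β⌉, and let K : ℝ → ℝ be a kernel of order ℓ with ‖K‖_∞ < ∞ and μ_β(K) := ∫|u|^β|K(u)|du < ∞. Fix x₀ ∈ ℝ. There exist an estimator f̌_n(x₀), a measurable function of X₁,…,X_n depending only on (n,β,γ,K) and not on δ, and a constant Č(β,K) > 0 depending only on β and K, such that for every f ∈ F(β,γ), every n ∈ ℕ and every δ ∈ (0,1], if X₁,…,X_n are i.i.d. with density f, then with probability at least 1−δ, (f̌_n(x₀) − f(x₀))² ≤ Č(β,K)·γ^{2/(β+1)}·min((log(8/δ)/n)^{2β/(2β+1)},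 1). -/
open MeasureTheory ENNReal

/-!
Write `s = γ ^ (-1 / (β + 1))`. For each integer scale `1 ≤ k ≤ n` the kernel density estimator with
bandwidth `s τ`, `τ = (k / n) ^ (1 / (2β + 1))`, is the centre of a confidence interval for `f x₀` of
radius `D s⁻¹ τ ^ β` that fails with probability at most `2 e ^ (-2k)` (`kde_deviation`). The bias is
bounded by Taylor's formula (`bias_le`), the deviation by a Chernoff bound (`chernoff`) in which the
variance is controlled through the uniform bound on the Hölder class (`density_sup_le`), itself a
consequence of the bias bound at bandwidth `s`. The centre and the radius are known without knowing
`f`, because `β`, `γ` and `K` are.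

The estimator starts from `0`, projects successively onto the intervals of scales `1, 2, …, n`, from
the narrowest and least reliable to the widest and most reliable, and finally onto the interval
`[0, M / s]`, which contains `f x₀` with certainty. Projection onto an interval containing `f x₀` does
not increase the distance to `f x₀`. Hence, if all intervals of scales `k, …, n` contain `f x₀`, the
error is at most twice the radius at scale `k` (`clampSeq_error`). This plays the part of Lepski's
selection rule, and measurability is immediate.

Given `δ`, take `k = ⌊log (8 / δ)⌋`. The failure probabilities of the scales `k, …, n` add up to at
most `δ` (`sum_exp_tail`); if `k > n`, the final projection alone gives the bound.
-/

/-! ### Taylor expansion with Hölder remainder -/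

/-- The Taylor polynomial of degree `m` at `x₀` has error at most `γ |x - x₀| ^ (α + m)` when the `m`-th
derivative is `α`-Hölder at `x₀`. Induction on `m`: the remainder of `g` has as derivative the
remainder of `g'`, so the mean value inequality gains one power of `|x - x₀|`. -/
lemma taylor_remainder (γ α x₀ : ℝ) (hγ : 0 ≤ γ) (hα : 0 ≤ α) (m : ℕ) :
    ∀ g : ℝ → ℝ, (∀ k < m, Differentiable ℝ (iteratedDeriv k g)) →
      (∀ y, |iteratedDeriv m g y - iteratedDeriv m g x₀| ≤ γ * |y - x₀| ^ α) →
      ∀ x, |g x - ∑ j ∈ Finset.range (m + 1),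
        iteratedDeriv j g x₀ / (j.factorial : ℝ) * (x - x₀) ^ j| ≤ γ * |x - x₀| ^ (α + m) := by
  induction m with
  | zero => intro g _ hH x; simpa using hH x
  | succ m ih =>
    intro g hd hH x
    have hd0 : Differentiable ℝ g := by simpa using hd 0 (by omega)
    have key := ih (deriv g)
      (fun k hk => by rw [← iteratedDeriv_succ']; exact hd (k + 1) (by omega))
      (fun y => by rw [← iteratedDeriv_succ']; exact hH y)
    set R : ℝ → ℝ := fun x => g x - ∑ j ∈ Finset.range (m + 1 + 1),
        iteratedDeriv j g x₀ / (j.factorial : ℝ) * (x - x₀) ^ j with hR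
    have hR0 : R x₀ = 0 := by
      simp only [hR]
      rw [Finset.sum_range_succ']
      simp
    have hderiv : ∀ y, HasDerivAt R (deriv g y - ∑ j ∈ Finset.range (m + 1),
        iteratedDeriv j (deriv g) x₀ / (j.factorial : ℝ) * (y - x₀) ^ j) y := by
      intro y
      have hs : HasDerivAt (fun x => ∑ j ∈ Finset.range (m + 1 + 1),
          iteratedDeriv j g x₀ / (j.factorial : ℝ) * (x - x₀) ^ j)
          (∑ j ∈ Finset.range (m + 1 + 1),
            iteratedDeriv j g x₀ / (j.factorial : ℝ) * (j * (y - x₀) ^ (j - 1) * 1)) y :=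
        HasDerivAt.fun_sum fun j _ => (((hasDerivAt_id y).sub_const x₀).pow j).const_mul _
      have := (hd0 y).hasDerivAt.sub hs
      suffices heq : ∑ j ∈ Finset.range (m + 1 + 1),
          iteratedDeriv j g x₀ / (j.factorial : ℝ) * (j * (y - x₀) ^ (j - 1) * 1) =
          ∑ j ∈ Finset.range (m + 1),
            iteratedDeriv j (deriv g) x₀ / (j.factorial : ℝ) * (y - x₀) ^ j by
        rw [heq] at this; exact this
      rw [Finset.sum_range_succ' _ (m + 1)]
      simp only [iteratedDeriv_succ', Nat.factorial_succ]
      simp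
      refine Finset.sum_congr rfl fun j _ => ?_
      have : (j.factorial : ℝ) ≠ 0 := by positivity
      field_simp
    have hb : ∀ y ∈ Metric.closedBall x₀ |x - x₀|,
        ‖deriv g y - ∑ j ∈ Finset.range (m + 1),
        iteratedDeriv j (deriv g) x₀ / (j.factorial : ℝ) * (y - x₀) ^ j‖
          ≤ γ * |x - x₀| ^ (α + m) := by
      intro y hy
      rw [Metric.mem_closedBall, Real.dist_eq] at hy
      refine (key y).trans ?_
      gcongr
    have := (convex_closedBall x₀ |x - x₀|).norm_image_sub_le_of_norm_hasDerivWithin_le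
      (fun y _ => (hderiv y).hasDerivWithinAt) hb
      (Metric.mem_closedBall_self (abs_nonneg _)) (y := x) (by simp [Real.dist_eq])
    rw [hR0, sub_zero, Real.norm_eq_abs, Real.norm_eq_abs] at this
    refine this.trans (le_of_eq ?_)
    rw [mul_assoc]
    congr 1
    push_cast
    rw [← add_assoc, Real.rpow_add_one' (abs_nonneg _) (by positivity)]

/-! ### A Chernoff bound for i.i.d. sums -/

/-- Upper tail of a sum of i.i.d. bounded variables, at a fixed Laplace parameter `l` with `l b ≤ 1`. In
that range `exp u ≤ 1 + u + u ^ 2`, so the moment generating function sees only the second moment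
`v`; Hoeffding's inequality, which sees only the range `b`, would be too weak for kernels. -/
lemma chernoff (P : Measure ℝ) [IsProbabilityMeasure P] (Y : ℝ → ℝ) (hY : Measurable Y)
    (b v l ε : ℝ) (hb : ∀ x, |Y x| ≤ b) (hv : ∫ x, Y x ^ 2 ∂P ≤ v) (hl : 0 ≤ l) (hlb : l * b ≤ 1)
    (n : ℕ) :
    (Measure.pi fun _ : Fin n => P).real {x | ε ≤ ∑ i, Y (x i) - n * ∫ x, Y x ∂P} ≤
      Real.exp (n * (l ^ 2 * v) - l * ε) := by
  have bdd : ∀ g : ℝ → ℝ, Measurable g → ∀ C, (∀ x, |g x| ≤ C) → Integrable g P :=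
    fun g hg C hC => Integrable.of_bound hg.aestronglyMeasurable C (.of_forall hC)
  have hYi := bdd Y hY b hb
  have hY2i := bdd (fun x => Y x ^ 2) (hY.pow_const 2) (b ^ 2) (fun x => by
    rw [abs_pow]; gcongr; exact hb x)
  set q := ∫ x, Y x ∂P with hq
  have hEi : Integrable (fun x => Real.exp (l * Y x)) P :=
    bdd _ (by fun_prop) (Real.exp 1) (fun x => by
      rw [abs_of_pos (Real.exp_pos _)]
      gcongr
      exact (mul_le_mul_of_nonneg_left ((le_abs_self _).trans (hb x)) hl).trans hlb)
  have hE : ∫ x, Real.exp (l * Y x) ∂P ≤ Real.exp (l * q + l ^ 2 * v) := by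
    calc ∫ x, Real.exp (l * Y x) ∂P ≤ ∫ x, (1 + l * Y x + l ^ 2 * Y x ^ 2) ∂P := by
          refine integral_mono hEi (((integrable_const _).add (hYi.const_mul l)).add
            (hY2i.const_mul _)) fun x => ?_
          have h1 : |l * Y x| ≤ 1 := by
            rw [abs_mul, abs_of_nonneg hl]
            exact (mul_le_mul_of_nonneg_left (hb x) hl).trans hlb
          have := (abs_le.1 (Real.abs_exp_sub_one_sub_id_le h1)).2
          simp only
          nlinarith
      _ = 1 + l * q + l ^ 2 * ∫ x, Y x ^ 2 ∂P := by
          have h1 : Integrable (fun x => 1 + l * Y x) P := (integrable_const _).add (hYi.const_mul l)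
          rw [integral_add h1 (hY2i.const_mul _), integral_add (integrable_const _) (hYi.const_mul l), integral_const_mul,
            integral_const_mul]
          simp [hq]
      _ ≤ 1 + (l * q + l ^ 2 * v) := by nlinarith [sq_nonneg l]
      _ ≤ _ := by linarith [Real.add_one_le_exp (l * q + l ^ 2 * v)]
  have hprod : ∀ x : Fin n → ℝ, Real.exp (l * ∑ i, Y (x i)) = ∏ i, Real.exp (l * Y (x i)) := by
    intro x; rw [Finset.mul_sum, Real.exp_sum]
  have hint : Integrable (fun x : Fin n → ℝ => Real.exp (l * ∑ i, Y (x i)))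
      (Measure.pi fun _ : Fin n => P) := by
    simp only [hprod]
    exact Integrable.fintype_prod (fun _ => hEi)
  have hmgf : ProbabilityTheory.mgf (fun x : Fin n → ℝ => ∑ i, Y (x i))
      (Measure.pi fun _ : Fin n => P) l = (∫ x, Real.exp (l * Y x) ∂P) ^ n := by
    simp only [ProbabilityTheory.mgf, hprod]
    simpa using integral_fintype_prod_eq_pow (ι := Fin n) (fun x => Real.exp (l * Y x)) (μ := P)
  have := ProbabilityTheory.measure_ge_le_exp_mul_mgf (ε + n * q) hl hint
  rw [hmgf] at this
  have hset : {x : Fin n → ℝ | ε ≤ ∑ i, Y (x i) - n * q} =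
      {x : Fin n → ℝ | ε + n * q ≤ ∑ i, Y (x i)} := by
    ext x; simp only [Set.mem_ofPred_eq]; constructor <;> intro h <;> linarith
  rw [hset]
  refine this.trans ?_
  calc _ ≤ Real.exp (-l * (ε + n * q)) * Real.exp (l * q + l ^ 2 * v) ^ n := by
        gcongr
    _ = _ := by
        rw [← Real.exp_nat_mul, ← Real.exp_add]; congr 1; ring

/-! ### Successive projection onto confidence intervals -/

/-- Starting from `0`, project successively onto the intervals `[c j - r j, c j + r j]`, `j = 1, 2, …`;
the `k`-th term is the value after the projection onto the `k`-th interval. An interval with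
`r j < 0` is sent to its left end `c j - r j`. -/
def clampSeq (c r : ℕ → ℝ) : ℕ → ℝ
  | 0 => 0
  | k + 1 => max (c (k + 1) - r (k + 1)) (min (c (k + 1) + r (k + 1)) (clampSeq c r k))

/-- Projecting onto an interval that contains `y` does not increase the distance to `y`. -/
lemma clamp_contract {a b z y : ℝ} (ha : a ≤ y) (hb : y ≤ b) :
    |max a (min b z) - y| ≤ |z - y| := by
  have h1 := le_abs_self (z - y)
  have h2 := neg_abs_le (z - y)
  rw [abs_le]
  constructor
  · have : min b z ≥ y - |z - y| := le_min (by linarith [abs_nonneg (z - y)]) (by linarith)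
    linarith [le_max_right a (min b z)]
  · have := min_le_right b z
    have : max a (min b z) ≤ y + |z - y| := max_le (by linarith [abs_nonneg (z - y)]) (by linarith)
    linarith

/-- If `y` lies in all the intervals from the `k`-th to the `n`-th, the final projection is within
`2 * r k` of `y`: this holds after step `k`, and later projections only move closer to `y`. -/
lemma clampSeq_error (c r : ℕ → ℝ) (y : ℝ) (k : ℕ) (hk : 1 ≤ k) :
    ∀ n, k ≤ n → (∀ j, k ≤ j → j ≤ n → |c j - y| ≤ r j) → |clampSeq c r n - y| ≤ 2 * r k := by
  intro n hn
  induction n, hn using Nat.le_induction with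
  | base =>
    intro h
    obtain ⟨k, rfl⟩ : ∃ i, k = i + 1 := ⟨k - 1, by omega⟩
    have h0 := abs_le.1 (h (k + 1) le_rfl le_rfl)
    simp only [clampSeq]
    have h1 := le_max_left (c (k+1) - r (k+1)) (min (c (k+1) + r (k+1)) (clampSeq c r k))
    have h2 : max (c (k+1) - r (k+1)) (min (c (k+1) + r (k+1)) (clampSeq c r k))
        ≤ c (k+1) + r (k+1) := max_le (by linarith) (min_le_left _ _)
    rw [abs_le]
    constructor <;> linarith
  | succ n hn ih =>
    intro h
    have h0 := abs_le.1 (h (n + 1) (by omega) le_rfl)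
    exact (clamp_contract (by linarith) (by linarith)).trans
      (ih fun j h1 h2 => h j h1 (by omega))

lemma clampSeq_measurable {Ω : Type*} [MeasurableSpace Ω] (c : ℕ → Ω → ℝ) (r : ℕ → ℝ)
    (hc : ∀ k, Measurable (c k)) (n : ℕ) :
    Measurable fun x => clampSeq (fun k => c k x) r n := by
  induction n with
  | zero => exact measurable_const
  | succ n ih =>
    simp only [clampSeq]
    exact ((hc _).sub_const _).max (((hc _).add_const _).min ih)

/-- A union bound over the scales `k ≤ j < n` with failure probabilities `2 e ^ (-2j)`, proved by
telescoping against `4 e ^ (-(j + 1))`. -/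
lemma sum_exp_tail (k : ℕ) (hk : 1 ≤ k) (n : ℕ) :
    ∑ j ∈ Finset.Ico k n, 2 * Real.exp (-(2 * j)) ≤ 4 * Real.exp (-((k : ℝ) + 1)) := by
  rcases lt_or_ge n k with h | h
  · rw [Finset.Ico_eq_empty (by omega)]; simp; positivity
  suffices ∑ j ∈ Finset.Ico k n, 2 * Real.exp (-(2 * j)) ≤
      4 * Real.exp (-((k : ℝ) + 1)) - 4 * Real.exp (-((n : ℝ) + 1)) by
    linarith [Real.exp_pos (-((n : ℝ) + 1))]
  induction n, h using Nat.le_induction with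
  | base => simp
  | succ n hn ih =>
    rw [Finset.sum_Ico_succ_top hn]
    have h1 : Real.exp (-(2 * (n : ℝ))) ≤ Real.exp (-((n : ℝ) + 1)) := by
      gcongr
      have : (1 : ℝ) ≤ n := by exact_mod_cast hk.trans hn
      linarith
    have h2 : Real.exp (-(((n + 1 : ℕ) : ℝ) + 1)) ≤ Real.exp (-((n : ℝ) + 1)) / 2 := by
      rw [show -(((n + 1 : ℕ) : ℝ) + 1) = -((n : ℝ) + 1) + -1 by push_cast; ring, Real.exp_add]
      have : Real.exp (-1) ≤ 1 / 2 := by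
        have := Real.exp_neg_one_lt_d9; linarith
      nlinarith [Real.exp_pos (-((n : ℝ) + 1))]
    linarith

/-! ### Bias of the kernel smoother and the sup bound on Hölder densities -/

lemma integral_rescale (f G : ℝ → ℝ) (x₀ h : ℝ) (hh : 0 < h) :
    ∫ x, f x * G ((x - x₀) / h) = h * ∫ u, G u * f (x₀ + h * u) := by
  rw [← integral_add_left_eq_self (fun x => f x * G ((x - x₀) / h)) x₀]
  have := Measure.integral_comp_mul_left (fun x => f (x₀ + x) * G ((x₀ + x - x₀) / h)) h
  rw [abs_of_pos (inv_pos.2 hh), smul_eq_mul] at this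
  have h2 : ∀ u, (x₀ + h * u - x₀) / h = u := fun u => by field_simp; ring
  simp only [h2] at this
  simp only [mul_comm (G _), this]
  field_simp

lemma integral_density (f : ℝ → ℝ) (hf0 : ∀ x, 0 ≤ f x) (hfm : Measurable f) (g : ℝ → ℝ) :
    ∫ x, g x ∂(volume.withDensity fun x => ENNReal.ofReal (f x)) = ∫ x, f x * g x := by
  rw [integral_withDensity_eq_integral_toReal_smul hfm.ennreal_ofReal (by simp)]
  simp [ENNReal.toReal_ofReal (hf0 _)]

lemma density_integrable {f : ℝ → ℝ} (h1 : ∫ x, f x = 1) : Integrable f := by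
  by_contra h
  rw [integral_undef h] at h1
  exact zero_ne_one h1

lemma density_isProbability {f : ℝ → ℝ} (hf0 : ∀ x, 0 ≤ f x) (h1 : ∫ x, f x = 1) :
    IsProbabilityMeasure (volume.withDensity fun x => ENNReal.ofReal (f x)) := by
  constructor
  rw [withDensity_apply _ MeasurableSet.univ, Measure.restrict_univ,
    ← ofReal_integral_eq_lintegral_ofReal (density_integrable h1) (.of_forall hf0), h1]
  simp

lemma kernel_mul_integrable {K f : ℝ → ℝ} {B : ℝ} (hK : Measurable K) (hB : ∀ u, |K u| ≤ B)
    (hf : Integrable f) (x₀ h : ℝ) (hh : 0 < h) :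
    Integrable fun u => K u * f (x₀ + h * u) :=
  ((hf.comp_add_left x₀).comp_mul_left' hh.ne').bdd_mul hK.aestronglyMeasurable (.of_forall hB)

/-- Bias of the kernel smoother at bandwidth `h`: the order of `K` cancels all Taylor terms except the
constant one. -/
lemma bias_le {β : ℝ} (hβ : 0 < β) {K : ℝ → ℝ} (hKmeas : Measurable K)
    (hKker : (∫ u, K u) = 1)
    (hKord : ∀ j : ℕ, 1 ≤ j → j ≤ ⌈β⌉₊ - 1 → (∫ u, u ^ j * K u) = 0)
    {B : ℝ} (hB : ∀ u, |K u| ≤ B) (hKmom : Integrable fun u => |u| ^ β * |K u|)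
    {γ : ℝ} (hγ : 0 < γ) {f : ℝ → ℝ} (hf : f ∈ holderClass β γ) (x₀ h : ℝ) (hh : 0 < h) :
    |(∫ u, K u * f (x₀ + h * u)) - f x₀| ≤ γ * h ^ β * ∫ u, |u| ^ β * |K u| := by
  obtain ⟨hf0, hfm, hf1, hfd, hfH⟩ := hf
  set m := ⌈β⌉₊ - 1 with hm
  have hmβ : (m : ℝ) < β := by
    have h1 : 0 < ⌈β⌉₊ := Nat.ceil_pos.2 hβ
    exact Nat.lt_ceil.1 (by omega)
  -- `∫ K = 1` forces integrability, since the integral of a non-integrable function is `0`.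
  have hKi : Integrable K := by
    by_contra h
    rw [integral_undef h] at hKker
    exact zero_ne_one hKker
  have hji : ∀ j ∈ Finset.range (m + 1), Integrable fun u => u ^ j * K u := by
    intro j hj
    have hjm : (j : ℝ) ≤ m := by exact_mod_cast Nat.lt_succ_iff.1 (Finset.mem_range.1 hj)
    refine (hKi.abs.add hKmom).mono' (by fun_prop) (.of_forall fun u => ?_)
    simp only [Pi.add_apply, norm_mul, norm_pow, Real.norm_eq_abs]
    rw [← one_add_mul]
    gcongr
    rcases le_total |u| 1 with h1 | h1
    · have := pow_le_one₀ (n := j) (abs_nonneg u) h1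
      have : 0 ≤ |u| ^ β := by positivity
      linarith
    · have : |u| ^ j ≤ |u| ^ β := by
        rw [← Real.rpow_natCast]
        exact Real.rpow_le_rpow_of_exponent_le h1 (hjm.trans hmβ.le)
      linarith
  have hT := taylor_remainder γ (β - m) x₀ hγ.le (by linarith) m f hfd (fun y => hfH y x₀)
  set a : ℕ → ℝ := fun j => iteratedDeriv j f x₀ / (j.factorial : ℝ) with ha
  have hpoly : ∫ u, ∑ j ∈ Finset.range (m + 1), a j * h ^ j * (u ^ j * K u) = f x₀ := by
    rw [integral_finsetSum _ fun j hj => (hji j hj).const_mul _]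
    simp only [integral_const_mul]
    rw [Finset.sum_range_succ', Finset.sum_eq_zero]
    · simp [hKker, ha]
    · intro j hj
      rw [hKord (j + 1) (by omega) (by have := Finset.mem_range.1 hj; omega), mul_zero]
  rw [← hpoly, ← integral_sub (kernel_mul_integrable hKmeas hB (density_integrable hf1) x₀ h hh)
    (integrable_finsetSum _ fun j hj => (hji j hj).const_mul _), ← integral_const_mul,
    ← Real.norm_eq_abs]
  refine norm_integral_le_of_norm_le (hKmom.const_mul _) (.of_forall fun u => ?_)
  have := hT (x₀ + h * u)
  rw [add_sub_cancel_left, sub_add_cancel, abs_mul, abs_of_pos hh,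
    Real.mul_rpow hh.le (abs_nonneg u)] at this
  calc ‖K u * f (x₀ + h * u) - ∑ j ∈ Finset.range (m + 1), a j * h ^ j * (u ^ j * K u)‖
      = |K u| * |f (x₀ + h * u) - ∑ j ∈ Finset.range (m + 1), a j * (h * u) ^ j| := by
        rw [Real.norm_eq_abs, ← abs_mul, mul_sub, Finset.mul_sum]
        congr 2
        exact Finset.sum_congr rfl fun j _ => by rw [mul_pow]; ring
    _ ≤ |K u| * (γ * (h ^ β * |u| ^ β)) := by gcongr
    _ = _ := by ring

/-- Uniform bound on the Hölder class: at the bandwidth `s` with `γ s ^ β = 1 / s`, both the smoothed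
density, at most `B / s` because `f` has mass one, and the bias are of order
`1 / s = γ ^ (1 / (β + 1))`. -/
lemma density_sup_le {β : ℝ} (hβ : 0 < β) {K : ℝ → ℝ} (hKmeas : Measurable K)
    (hKker : (∫ u, K u) = 1)
    (hKord : ∀ j : ℕ, 1 ≤ j → j ≤ ⌈β⌉₊ - 1 → (∫ u, u ^ j * K u) = 0)
    {B : ℝ} (hB : ∀ u, |K u| ≤ B) (hKmom : Integrable fun u => |u| ^ β * |K u|)
    {γ : ℝ} (hγ : 0 < γ) {f : ℝ → ℝ} (hf : f ∈ holderClass β γ) {s : ℝ} (hs : 0 < s)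
    (hsγ : γ * s ^ β = s⁻¹) (x : ℝ) :
    f x ≤ (B + ∫ u, |u| ^ β * |K u|) * s⁻¹ := by
  have hb := bias_le hβ hKmeas hKker hKord hB hKmom hγ hf x s hs
  obtain ⟨hf0, hfm, hf1, hfd, hfH⟩ := hf
  have hi := ((density_integrable hf1).comp_add_left x).comp_mul_left' hs.ne'
  have h1 : ∫ u, K u * f (x + s * u) ≤ ∫ u, B * f (x + s * u) :=
    integral_mono (kernel_mul_integrable hKmeas hB (density_integrable hf1) x s hs)
      (hi.const_mul B)
      fun u => mul_le_mul_of_nonneg_right ((le_abs_self _).trans (hB u)) (hf0 _)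
  have h2 : ∫ u, f (x + s * u) = s⁻¹ := by
    rw [Measure.integral_comp_mul_left (fun y => f (x + y)) s, integral_add_left_eq_self f x, hf1,
      abs_of_pos (inv_pos.2 hs)]
    simp
  rw [integral_const_mul, h2] at h1
  rw [hsγ] at hb
  have := neg_abs_le ((∫ u, K u * f (x + s * u)) - f x)
  linarith

/-! ### Confidence intervals from kernel density estimators -/

/-- Two-sided form of `chernoff`. -/
lemma deviation {P : Measure ℝ} [IsProbabilityMeasure P] {Y : ℝ → ℝ} (hY : Measurable Y)
    {b v l ε : ℝ} (hb : ∀ x, |Y x| ≤ b) (hv : ∫ x, Y x ^ 2 ∂P ≤ v) (hl : 0 ≤ l) (hlb : l * b ≤ 1)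
    (n : ℕ) :
    (Measure.pi fun _ : Fin n => P).real {x | ε ≤ |∑ i, Y (x i) - n * ∫ x, Y x ∂P|} ≤
      2 * Real.exp (n * (l ^ 2 * v) - l * ε) := by
  have h1 := chernoff P Y hY b v l ε hb hv hl hlb n
  have h2 := chernoff P (fun x => -Y x) hY.neg b v l ε (by simpa using hb) (by simpa using hv)
    hl hlb n
  have hsub : {x : Fin n → ℝ | ε ≤ |∑ i, Y (x i) - n * ∫ x, Y x ∂P|} ⊆
      {x | ε ≤ ∑ i, Y (x i) - n * ∫ x, Y x ∂P} ∪
      {x | ε ≤ ∑ i, -Y (x i) - n * ∫ x, -Y x ∂P} := by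
    intro x hx
    rcases le_abs.1 (Set.mem_ofPred_eq ▸ hx) with h | h
    · exact Or.inl h
    · refine Or.inr ?_
      simp only [Set.mem_ofPred_eq, integral_neg, Finset.sum_neg_distrib]
      linarith
  have := (measureReal_mono (μ := Measure.pi fun _ : Fin n => P) hsub).trans
    (measureReal_union_le _ _)
  linarith

/-- The bandwidth `(k / n) ^ (1 / (2β + 1))` of confidence level `1 - 2 e ^ (-2k)`, in units of
`s = γ ^ (-1 / (β + 1))`. -/
noncomputable def bandwidth (β : ℝ) (n k : ℕ) : ℝ := ((k : ℝ) / n) ^ (1 / (2 * β + 1))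

/-- The kernel density estimator at `x₀` with bandwidth `h`, from the sample `x` of size `n`. -/
noncomputable def kde (K : ℝ → ℝ) (x₀ h : ℝ) (n : ℕ) (x : Fin n → ℝ) : ℝ :=
  (n * h)⁻¹ * ∑ i, K ((x i - x₀) / h)

/-- The constant `D` in the radius `D s⁻¹ τ ^ β` of the confidence intervals, where `τ` is the bandwidth
in units of `s` and `B` bounds `|K|`: the first two terms control the deviation and the last one the
bias. -/
noncomputable def radiusConst (β : ℝ) (K : ℝ → ℝ) (B : ℝ) : ℝ :=
  2 * B + (B + ∫ u, |u| ^ β * |K u|) * (∫ u, |K u|) + ∫ u, |u| ^ β * |K u|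

lemma kde_measurable {K : ℝ → ℝ} (hK : Measurable K) (x₀ h : ℝ) (n : ℕ) :
    Measurable (kde K x₀ h n) := by
  unfold kde; fun_prop

/-- With `τ = bandwidth β n k`: `τ ^ (2β + 1) = k / n` and `τ ^ (2β) = (k / n) ^ (2β / (2β + 1))`. -/
lemma bandwidth_facts {β : ℝ} (hβ : 0 < β) {n k : ℕ} (hk : 1 ≤ k) (hkn : k ≤ n) :
    0 < bandwidth β n k ∧ bandwidth β n k ^ β ≤ 1 ∧
      bandwidth β n k ^ β * bandwidth β n k ^ β * bandwidth β n k = (k : ℝ) / n ∧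
      (bandwidth β n k ^ β) ^ 2 = ((k : ℝ) / n) ^ (2 * β / (2 * β + 1)) := by
  have hk0 : (0 : ℝ) < k := by exact_mod_cast hk
  have hn0 : (0 : ℝ) < n := by exact_mod_cast hk.trans hkn
  have hL : (0 : ℝ) < (k : ℝ) / n := by positivity
  have hL1 : (k : ℝ) / n ≤ 1 := div_le_one_of_le₀ (by exact_mod_cast hkn) hn0.le
  have hp : 0 < bandwidth β n k := Real.rpow_pos_of_pos hL _
  refine ⟨hp, ?_, ?_, ?_⟩
  · exact Real.rpow_le_one hp.le (Real.rpow_le_one hL.le hL1 (by positivity)) hβ.le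
  · rw [← Real.rpow_add hp, ← Real.rpow_add_one hp.ne', bandwidth, ← Real.rpow_mul hL.le]
    convert Real.rpow_one _ using 2
    field_simp
    ring
  · rw [bandwidth, ← Real.rpow_mul hL.le, ← Real.rpow_natCast, ← Real.rpow_mul hL.le]
    congr 1
    push_cast
    field_simp

/-- At scale `k` the interval of radius `D s⁻¹ τ ^ β` around the kernel estimator misses `f x₀` with
probability at most `2 e ^ (-2k)`. The radius does not involve `f`. -/
lemma kde_deviation {β : ℝ} (hβ : 0 < β) {K : ℝ → ℝ} (hKmeas : Measurable K)
    (hKker : (∫ u, K u) = 1)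
    (hKord : ∀ j : ℕ, 1 ≤ j → j ≤ ⌈β⌉₊ - 1 → (∫ u, u ^ j * K u) = 0)
    {B : ℝ} (hB0 : 0 < B) (hB : ∀ u, |K u| ≤ B) (hKmom : Integrable fun u => |u| ^ β * |K u|)
    {γ : ℝ} (hγ : 0 < γ) {f : ℝ → ℝ} (hf : f ∈ holderClass β γ) {s : ℝ} (hs : 0 < s)
    (hsγ : γ * s ^ β = s⁻¹) (x₀ : ℝ) {n k : ℕ} (hk : 1 ≤ k) (hkn : k ≤ n) :
    (Measure.pi fun _ : Fin n => volume.withDensity fun x => ENNReal.ofReal (f x)).real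
      {x | radiusConst β K B * s⁻¹ * bandwidth β n k ^ β <
        |kde K x₀ (s * bandwidth β n k) n x - f x₀|} ≤ 2 * Real.exp (-(2 * k)) := by
  obtain ⟨hτ, hτ1, hτL, -⟩ := bandwidth_facts hβ hk hkn
  unfold radiusConst kde
  set τ := bandwidth β n k
  set μ := ∫ u, |u| ^ β * |K u| with hμ
  set A := ∫ u, |K u| with hA
  have hμ0 : 0 ≤ μ := integral_nonneg fun u => by positivity
  have hA0 : 0 ≤ A := integral_nonneg fun u => by positivity
  have hh : 0 < s * τ := by positivity
  have hn0 : (0 : ℝ) < n := by exact_mod_cast hk.trans hkn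
  have hbias := bias_le hβ hKmeas hKker hKord hB hKmom hγ hf x₀ (s * τ) hh
  have hsup := density_sup_le hβ hKmeas hKker hKord hB hKmom hγ hf hs hsγ
  rw [Real.mul_rpow hs.le hτ.le, ← mul_assoc γ, hsγ, ← hμ] at hbias
  rw [← hμ] at hsup
  obtain ⟨hf0, hfm, hf1, -, -⟩ := hf
  have := density_isProbability hf0 hf1
  set P := volume.withDensity fun x => ENNReal.ofReal (f x) with hP
  set Y : ℝ → ℝ := fun x => K ((x - x₀) / (s * τ)) with hY
  have hYm : Measurable Y := by fun_prop
  have hq : ∫ x, Y x ∂P = s * τ * ∫ u, K u * f (x₀ + s * τ * u) := by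
    rw [hP, integral_density f hf0 hfm, integral_rescale f K x₀ _ hh]
  have hKi : Integrable K := by
    by_contra h
    rw [integral_undef h] at hKker
    exact zero_ne_one hKker
  -- The sup bound on `f` makes the second moment of order `τ`, not `1`.
  have hv : ∫ x, Y x ^ 2 ∂P ≤ (B + μ) * B * A * τ := by
    rw [hP, integral_density f hf0 hfm,
      integral_rescale f (fun u => K u ^ 2) x₀ _ hh]
    have : ∫ u, K u ^ 2 * f (x₀ + s * τ * u) ≤ ∫ u, (B * ((B + μ) * s⁻¹)) * |K u| := by
      refine integral_mono_of_nonneg (.of_forall fun u => ?_) (hKi.abs.const_mul _)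
        (.of_forall fun u => ?_)
      · have := hf0 (x₀ + s * τ * u)
        simp only [Pi.zero_apply]
        positivity
      · simp only
        calc K u ^ 2 * f (x₀ + s * τ * u) = |K u| * |K u| * f (x₀ + s * τ * u) := by
              rw [← sq, sq_abs]
          _ ≤ |K u| * B * ((B + μ) * s⁻¹) := by
              have := hf0 (x₀ + s * τ * u)
              gcongr
              · exact hB u
              · exact hsup _
          _ = _ := by ring
    rw [integral_const_mul, ← hA] at this
    calc _ ≤ s * τ * (B * ((B + μ) * s⁻¹) * A) := by gcongr
      _ = _ := by field_simp
  -- With `l = τ ^ β / B`, the radius constant makes the Chernoff exponent exactly `-2 n τ ^ (2β + 1) = -2k`.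
  have hdev := deviation hYm (l := τ ^ β / B) (ε := n * (2 * B + (B + μ) * A) * (τ * τ ^ β))
    (fun x => hB _) hv (by positivity) (by rwa [div_mul_cancel₀ _ hB0.ne']) n
  have hexp : n * ((τ ^ β / B) ^ 2 * ((B + μ) * B * A * τ)) -
      τ ^ β / B * (n * (2 * B + (B + μ) * A) * (τ * τ ^ β)) = -(2 * k) := by
    have : (k : ℝ) = n * (τ ^ β * τ ^ β * τ) := by rw [hτL]; field_simp
    rw [this]
    field_simp
    ring
  rw [hexp] at hdev
  refine (measureReal_mono fun x hx => ?_).trans hdev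
  simp only [Set.mem_ofPred_eq] at hx ⊢
  set S := ∑ i, Y (x i) with hS
  set J := ∫ u, K u * f (x₀ + s * τ * u)
  have hsplit : (n * (s * τ))⁻¹ * S - f x₀ = (n * (s * τ))⁻¹ * (S - n * ∫ x, Y x ∂P) + (J - f x₀) := by
    rw [hq]
    field_simp
    ring
  have h1 : (2 * B + (B + μ) * A) * s⁻¹ * τ ^ β ≤ |(n * (s * τ))⁻¹ * (S - n * ∫ x, Y x ∂P)| := by
    have h2 := abs_add_le ((n * (s * τ))⁻¹ * (S - n * ∫ x, Y x ∂P)) (J - f x₀)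
    rw [← hsplit] at h2
    linarith
  rw [abs_mul, abs_of_pos (by positivity : 0 < (n * (s * τ))⁻¹)] at h1
  calc n * (2 * B + (B + μ) * A) * (τ * τ ^ β)
      = n * (s * τ) * ((2 * B + (B + μ) * A) * s⁻¹ * τ ^ β) := by field_simp
    _ ≤ n * (s * τ) * ((n * (s * τ))⁻¹ * |S - n * ∫ x, Y x ∂P|) := by gcongr
    _ = _ := by field_simp

/-- a `δ`-independent pointwise density estimator via Lepski's method. -/
theorem lepski_pointwise_density_estimator
    (β : ℝ) (hβ : 0 < β) (K : ℝ → ℝ) (hKmeas : Measurable K)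
    -- `K` is a kernel of order `ℓ = ⌈β⌉`
    (hKker : (∫ u, K u) = 1)
    (hKord : ∀ j : ℕ, 1 ≤ j → j ≤ ⌈β⌉₊ - 1 → (∫ u, u ^ j * K u) = 0)
    -- `‖K‖_∞ < ∞`
    (hKbdd : ∃ B : ℝ, ∀ u, |K u| ≤ B)
    -- `μ_β(K) = ∫ |u|^β |K(u)| du < ∞`
    (hKmom : Integrable fun u => |u| ^ β * |K u|) :
    ∃ Cc : ℝ, 0 < Cc ∧
      ∀ γ : ℝ, 0 < γ → ∀ x₀ : ℝ,
        ∃ est : (n : ℕ) → (Fin n → ℝ) → ℝ, (∀ n, Measurable (est n)) ∧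
          ∀ f ∈ holderClass β γ, ∀ n : ℕ, 0 < n → ∀ δ : ℝ, 0 < δ → δ ≤ 1 →
            (Measure.pi fun _ : Fin n => volume.withDensity fun x => ENNReal.ofReal (f x))
              {x | Cc * γ ^ ((2:ℝ) / (β + 1)) *
                  min ((Real.log (8/δ) / n) ^ (2 * β / (2 * β + 1))) 1 <
                (est n x - f x₀) ^ 2} ≤ ENNReal.ofReal δ := by
  obtain ⟨B₀, hB₀⟩ := hKbdd
  obtain ⟨B, hB0, hB⟩ : ∃ B : ℝ, 0 < B ∧ ∀ u, |K u| ≤ B :=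
    ⟨max B₀ 1, by positivity, fun u => (hB₀ u).trans (le_max_left _ _)⟩
  set D := radiusConst β K B with hD
  set M := B + ∫ u, |u| ^ β * |K u| with hM
  have hμ0 : 0 ≤ ∫ u, |u| ^ β * |K u| := integral_nonneg fun u => by positivity
  have hA0 : 0 ≤ ∫ u, |K u| := integral_nonneg fun u => by positivity
  have hM0 : 0 < M := by positivity
  have hMD : M ≤ D := by
    have : 0 ≤ M * ∫ u, |K u| := by positivity
    simp only [hD, radiusConst, ← hM]
    linarith
  refine ⟨4 * D ^ 2, by nlinarith, fun γ hγ x₀ => ?_⟩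
  -- `s = γ ^ (-1 / (β + 1))` is the length scale at which the class has Hölder constant one.
  obtain ⟨s, hs, hsγ, hsC⟩ : ∃ s : ℝ, 0 < s ∧ γ * s ^ β = s⁻¹ ∧
      γ ^ ((2 : ℝ) / (β + 1)) = (s⁻¹) ^ 2 := by
    refine ⟨γ ^ (-(1 / (β + 1))), by positivity, ?_, ?_⟩
    · rw [← Real.rpow_mul hγ.le, ← Real.rpow_neg hγ.le, ← Real.rpow_one_add' hγ.le]
      · congr 1
        field_simp
        ring
      · have : 1 + -(1 / (β + 1)) * β = 1 / (β + 1) := by field_simp; ring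
        rw [this]; positivity
    · rw [← Real.rpow_neg hγ.le, ← Real.rpow_natCast, ← Real.rpow_mul hγ.le]
      congr 1
      push_cast
      ring
  set c : (n : ℕ) → ℕ → (Fin n → ℝ) → ℝ :=
    fun n k => kde K x₀ (s * bandwidth β n k) n with hc
  set r : ℕ → ℕ → ℝ := fun n k => D * s⁻¹ * bandwidth β n k ^ β with hr
  refine ⟨fun n x => max 0 (min (M * s⁻¹) (clampSeq (fun k => c n k x) (r n) n)), fun n => ?_, ?_⟩
  · exact measurable_const.max (measurable_const.min
      (clampSeq_measurable (c n) (r n) (fun k => kde_measurable hKmeas _ _ _) n))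
  intro f hf n hn δ hδ hδ1
  have hf0 := hf.1
  have hsup := density_sup_le hβ hKmeas hKker hKord hB hKmom hγ hf hs hsγ x₀
  rw [← hM] at hsup
  have := density_isProbability hf0 hf.2.2.1
  rw [hsC]
  set t := Real.log (8 / δ) with ht
  have ht1 : 1 ≤ t := by
    rw [ht, Real.le_log_iff_exp_le (by positivity), le_div_iff₀ hδ]
    nlinarith [Real.exp_one_lt_d9, Real.exp_pos 1]
  -- Error level `δ` corresponds to the scale `k = ⌊log (8 / δ)⌋`, which the estimator never sees.
  set k := ⌊t⌋₊ with hk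
  have hk1 : 1 ≤ k := Nat.le_floor (by exact_mod_cast ht1)
  have hkt : (k : ℝ) ≤ t := Nat.floor_le (by linarith)
  have htk : t < k + 1 := Nat.lt_floor_add_one t
  have hn0 : (0 : ℝ) < n := by exact_mod_cast hn
  have hp : 0 < 2 * β / (2 * β + 1) := by positivity
  rcases lt_or_ge n k with hnk | hkn
  · -- Fewer than `t` observations: the truncation to `[0, M / s]` alone gives the bound.
    have hL : 1 ≤ t / n := by
      rw [one_le_div hn0]
      exact le_trans (by exact_mod_cast hnk.le) hkt
    rw [min_eq_right (Real.one_le_rpow hL hp.le)]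
    refine (measure_mono_null (t := ∅) (fun x hx => ?_) measure_empty).le.trans zero_le
    simp only [Set.mem_ofPred_eq] at hx
    refine absurd hx (not_lt.2 ?_)
    set z := max 0 (min (M * s⁻¹) (clampSeq (fun k => c n k x) (r n) n))
    have hz0 : 0 ≤ z := le_max_left _ _
    have hz1 : z ≤ M * s⁻¹ := max_le (by positivity) (min_le_left _ _)
    have h1 : |z - f x₀| ≤ M * s⁻¹ := by
      have := hf0 x₀
      rw [abs_le]; constructor <;> linarith
    calc (z - f x₀) ^ 2 = |z - f x₀| ^ 2 := (sq_abs _).symm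
      _ ≤ (M * s⁻¹) ^ 2 := by gcongr
      _ ≤ (2 * D * s⁻¹) ^ 2 := by gcongr; linarith
      _ = _ := by ring
  set π := Measure.pi fun _ : Fin n => volume.withDensity fun x => ENNReal.ofReal (f x)
  set E : ℕ → Set (Fin n → ℝ) := fun j => {x | r n j < |c n j x - f x₀|} with hE
  have hsub : {x | 4 * D ^ 2 * s⁻¹ ^ 2 * min ((t / n) ^ (2 * β / (2 * β + 1))) 1 <
      (max 0 (min (M * s⁻¹) (clampSeq (fun k => c n k x) (r n) n)) - f x₀) ^ 2} ⊆
      ⋃ j ∈ Finset.Ico k (n + 1), E j := by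
    intro x hx
    by_contra hcon
    simp only [hE, Set.mem_iUnion, Finset.mem_Ico, Set.mem_ofPred_eq, not_exists, not_lt] at hcon hx
    refine absurd hx (not_lt.2 ?_)
    have h1 := clampSeq_error (fun k => c n k x) (r n) (f x₀) k hk1 n hkn
      (fun j h1 h2 => hcon j ⟨h1, by omega⟩)
    have h2 := (clamp_contract (hf0 x₀) hsup).trans h1
    obtain ⟨hb0, hb1, -, hb2⟩ := bandwidth_facts hβ hk1 hkn
    calc _ = |max 0 (min (M * s⁻¹) (clampSeq (fun k => c n k x) (r n) n)) - f x₀| ^ 2 :=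
          (sq_abs _).symm
      _ ≤ (2 * r n k) ^ 2 := by gcongr
      _ = 4 * D ^ 2 * s⁻¹ ^ 2 * (bandwidth β n k ^ β) ^ 2 := by simp only [hr]; ring
      _ ≤ _ := by
        gcongr
        refine le_min ?_ (pow_le_one₀ (by positivity) hb1)
        rw [hb2]
        gcongr
  calc π _ ≤ π (⋃ j ∈ Finset.Ico k (n + 1), E j) := measure_mono hsub
    _ ≤ ∑ j ∈ Finset.Ico k (n + 1), π (E j) := measure_biUnion_finset_le _ _
    _ ≤ ∑ j ∈ Finset.Ico k (n + 1), ENNReal.ofReal (2 * Real.exp (-(2 * j))) := by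
        refine Finset.sum_le_sum fun j hj => ?_
        rw [Finset.mem_Ico] at hj
        rw [← ofReal_measureReal]
        exact ENNReal.ofReal_le_ofReal (kde_deviation hβ hKmeas hKker hKord hB0 hB hKmom hγ hf hs
          hsγ x₀ (by omega) (by omega))
    _ = ENNReal.ofReal (∑ j ∈ Finset.Ico k (n + 1), 2 * Real.exp (-(2 * j))) :=
        (ENNReal.ofReal_sum_of_nonneg fun j _ => by positivity).symm
    _ ≤ ENNReal.ofReal δ := by
        refine ENNReal.ofReal_le_ofReal ((sum_exp_tail k hk1 _).trans ?_)
        have h1 : Real.exp (-((k : ℝ) + 1)) ≤ Real.exp (-t) := by gcongr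
        have h2 : Real.exp (-t) = δ / 8 := by
          rw [Real.exp_neg, ht, Real.exp_log (by positivity), inv_div]
        linarith
end
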